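/- arXiv:1903.04335 — 3 statements merged into one kernel-verified Lean document; each statement's English description precedes it below -/
import Mathlib

section
/- Let K = ⋃_{ℓ=1}^L [a_ℓ, b_ℓ] ⊆ [−1,1] with −1 = a_1 < b_1 < a_2 < ⋯ < a_L < b_L = 1, let w be continuous and strictly positive on K, and let N ≥ 1. For each d ≥ N let m_d := min { sslash P sslash_d : P monic of degree N } and let m_∞ := min { ‖P/w‖_{L1(K)} : P monic of degree N }. Then the sequence (m_d)_{d≥N} is nondecreasing, m_d ≤ m_∞ for all d ≥ N, and lim_{d→∞} m_d = m_∞. -/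
open MeasureTheory Filter Polynomial

/-- The `(d+1) × (d+1)` symmetric Toeplitz matrix built from a vector `y ∈ ℝ^{d+1}`,
with entries `y_{|i−j|}`. -/
noncomputable def toepFin (d : ℕ) (y : Fin (d + 1) → ℝ) :
    Matrix (Fin (d + 1)) (Fin (d + 1)) ℝ :=
  fun i j => y ⟨(((i : ℕ) : ℤ) - ((j : ℕ) : ℤ)).natAbs, by omega⟩

/-- The transplantation `P_ℓ(x) = P(((bℓ−aℓ)x + aℓ + bℓ)/2)` of a polynomial
from `[aℓ, bℓ]` to `[-1, 1]`. -/
noncomputable def transplant (aℓ bℓ : ℝ) (P : Polynomial ℝ) : Polynomial ℝ :=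
  P.comp (Polynomial.C ((bℓ - aℓ) / 2) * Polynomial.X + Polynomial.C ((aℓ + bℓ) / 2))

/-- The entries `J^ℓ_{k,n} = ∫_0^π cos(kθ) sin((n+1)θ) / w_ℓ(cos θ) dθ`, where
`w_ℓ(x) = w(((bℓ−aℓ)x + aℓ + bℓ)/2)` is the transplantation of the weight `w`. -/
noncomputable def Jent (aℓ bℓ : ℝ) (w : ℝ → ℝ) (k n : ℕ) : ℝ :=
  ∫ θ in (0:ℝ)..Real.pi,
    Real.cos (k * θ) * Real.sin ((n + 1) * θ) /
      w (((bℓ - aℓ) * Real.cos θ + aℓ + bℓ) / 2)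

/-- The weighted `L1` norm `‖P/w‖_{L1(K)} = ∑_ℓ ∫_{a_ℓ}^{b_ℓ} |P(t)|/w(t) dt`
on `K = ⋃_{ℓ<L} [a ℓ, b ℓ]`. -/
noncomputable def L1K (L : ℕ) (a b : ℕ → ℝ) (w : ℝ → ℝ) (P : Polynomial ℝ) : ℝ :=
  ∑ ℓ ∈ Finset.range L, ∫ t in (a ℓ)..(b ℓ), |P.eval t| / w t

/-- The ersatz norm `⫽P⫽_d`: the infimum of
`∑_ℓ ((b_ℓ−a_ℓ)/2)(y^{ℓ,+}_0 + y^{ℓ,−}_0)` over vectors `y^{ℓ,±} ∈ ℝ^{d+1}` with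
`y^{ℓ,+} − y^{ℓ,−} = J^{ℓ,d} W^ℓ p` and `Toep_d(y^{ℓ,±}) ⪰ 0`, where `q ℓ = W^ℓ p` is
the vector of second-kind Chebyshev coefficients of the transplantation `P_ℓ`. -/
noncomputable def ersatz (L N d : ℕ) (a b : ℕ → ℝ) (w : ℝ → ℝ) (P : Polynomial ℝ) : ℝ :=
  sInf { s : ℝ |
    ∃ q : ℕ → Fin (N + 1) → ℝ,
      (∀ ℓ < L, transplant (a ℓ) (b ℓ) P
          = ∑ n : Fin (N + 1), Polynomial.C (q ℓ n) * Polynomial.Chebyshev.U ℝ ((n : ℕ) : ℤ)) ∧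
      ∃ yp ym : ℕ → Fin (d + 1) → ℝ,
        (∀ ℓ < L, ∀ k : Fin (d + 1),
            yp ℓ k - ym ℓ k
              = ∑ n : Fin (N + 1), Jent (a ℓ) (b ℓ) w (k : ℕ) (n : ℕ) * q ℓ n) ∧
        (∀ ℓ < L, (toepFin d (yp ℓ)).PosSemidef ∧ (toepFin d (ym ℓ)).PosSemidef) ∧
        s = ∑ ℓ ∈ Finset.range L, ((b ℓ - a ℓ) / 2) * (yp ℓ 0 + ym ℓ 0) }


/-- Cosine moments on `[0, π]`. -/
noncomputable def cosMom (u : ℝ → ℝ) (k : ℕ) : ℝ :=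
  ∫ θ in (0:ℝ)..Real.pi, Real.cos (k * θ) * u θ

/-- Fejér mean attached to a vector of cosine moments. -/
noncomputable def fej (d : ℕ) (y : Fin (d + 1) → ℝ) (θ : ℝ) : ℝ :=
  (1 / (Real.pi * (d + 1))) * ∑ i : Fin (d + 1), ∑ j : Fin (d + 1),
    toepFin d y i j * Real.cos (((i : ℕ) - (j : ℕ) : ℝ) * θ)

lemma fej_continuous (d : ℕ) (y : Fin (d + 1) → ℝ) : Continuous (fej d y) := by
  unfold fej
  fun_prop

lemma fej_sub (d : ℕ) (y z : Fin (d + 1) → ℝ) (θ : ℝ) :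
    fej d (fun k => y k - z k) θ = fej d y θ - fej d z θ := by
  simp only [fej, toepFin, sub_mul, Finset.sum_sub_distrib, mul_sub]

lemma fej_add (d : ℕ) (y z : Fin (d + 1) → ℝ) (θ : ℝ) :
    fej d (fun k => y k + z k) θ = fej d y θ + fej d z θ := by
  simp only [fej, toepFin, add_mul, Finset.sum_add_distrib, mul_add]

lemma fej_smul (d : ℕ) (c : ℝ) (z : Fin (d + 1) → ℝ) (θ : ℝ) :
    fej d (fun k => c * z k) θ = c * fej d z θ := by
  simp only [fej, toepFin, mul_assoc, ← Finset.mul_sum]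
  ring

lemma psd_quad {n : ℕ} {M : Matrix (Fin n) (Fin n) ℝ} (hM : M.PosSemidef) (v : Fin n → ℝ) :
    0 ≤ ∑ i, ∑ j, v i * M i j * v j := by
  have h := hM.dotProduct_mulVec_nonneg v
  simpa [dotProduct, Matrix.mulVec, Finset.mul_sum, mul_assoc] using h

lemma fej_nonneg (d : ℕ) (y : Fin (d + 1) → ℝ) (h : (toepFin d y).PosSemidef) (θ : ℝ) :
    0 ≤ fej d y θ := by
  unfold fej
  have hpi := Real.pi_pos
  refine mul_nonneg (by positivity) ?_
  have h1 := psd_quad h (fun i => Real.cos ((i : ℕ) * θ))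
  have h2 := psd_quad h (fun i => Real.sin ((i : ℕ) * θ))
  have : ∑ i : Fin (d + 1), ∑ j : Fin (d + 1),
      toepFin d y i j * Real.cos (((i : ℕ) - (j : ℕ) : ℝ) * θ) =
      ∑ i : Fin (d + 1), ∑ j : Fin (d + 1),
        Real.cos ((i : ℕ) * θ) * toepFin d y i j * Real.cos ((j : ℕ) * θ) +
      ∑ i : Fin (d + 1), ∑ j : Fin (d + 1),
        Real.sin ((i : ℕ) * θ) * toepFin d y i j * Real.sin ((j : ℕ) * θ) := by
    simp only [← Finset.sum_add_distrib]
    refine Finset.sum_congr rfl fun i _ => Finset.sum_congr rfl fun j _ => ?_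
    rw [sub_mul, Real.cos_sub]
    ring
  rw [this]
  exact add_nonneg h1 h2

lemma int_cos_int (k : ℤ) :
    ∫ θ in (0:ℝ)..Real.pi, Real.cos ((k : ℝ) * θ) = if k = 0 then Real.pi else 0 := by
  split_ifs with h
  · simp [h]
  · have hk : (k : ℝ) ≠ 0 := by exact_mod_cast h
    rw [intervalIntegral.integral_comp_mul_left (fun x => Real.cos x) hk]
    simp [Real.sin_int_mul_pi]

lemma fej_integral (d : ℕ) (y : Fin (d + 1) → ℝ) :
    ∫ θ in (0:ℝ)..Real.pi, fej d y θ = y 0 := by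
  unfold fej
  rw [intervalIntegral.integral_const_mul, intervalIntegral.integral_finsetSum]
  · have : ∀ i : Fin (d + 1), ∫ θ in (0:ℝ)..Real.pi, ∑ j : Fin (d + 1),
        toepFin d y i j * Real.cos (((i : ℕ) - (j : ℕ) : ℝ) * θ) = Real.pi * y 0 := by
      intro i
      rw [intervalIntegral.integral_finsetSum]
      · rw [Finset.sum_eq_single i]
        · simp [toepFin, mul_comm]
        · intro j _ hj
          rw [intervalIntegral.integral_const_mul]
          have := int_cos_int ((i : ℕ) - (j : ℕ) : ℤ)
          push_cast at this
          rw [this, if_neg, mul_zero]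
          intro h
          apply hj
          ext
          omega
        · simp
      · intro j _
        exact Continuous.intervalIntegrable (by fun_prop) _ _
    rw [Finset.sum_congr rfl fun i _ => this i]
    have hpi := Real.pi_pos
    simp
    field_simp
  · intro j _
    exact Continuous.intervalIntegrable (by fun_prop) _ _

lemma fej_abs_le (d : ℕ) (yp ym : Fin (d + 1) → ℝ) (hp : (toepFin d yp).PosSemidef)
    (hm : (toepFin d ym).PosSemidef) :
    ∫ θ in (0:ℝ)..Real.pi, |fej d (fun k => yp k - ym k) θ| ≤ yp 0 + ym 0 := by
  rw [← fej_integral d yp, ← fej_integral d ym, ← intervalIntegral.integral_add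
    ((fej_continuous d yp).intervalIntegrable _ _) ((fej_continuous d ym).intervalIntegrable _ _)]
  refine intervalIntegral.integral_mono_on Real.pi_pos.le
    ((fej_continuous d _).abs.intervalIntegrable _ _)
    (((fej_continuous d yp).add (fej_continuous d ym)).intervalIntegrable _ _) ?_
  intro θ _
  rw [fej_sub]
  have h1 := fej_nonneg d yp hp θ
  have h2 := fej_nonneg d ym hm θ
  rw [abs_le]
  constructor <;> linarith

lemma toep_mom_psd (d : ℕ) (u : ℝ → ℝ) (hu : Continuous u)
    (hpos : ∀ θ ∈ Set.Icc (0:ℝ) Real.pi, 0 ≤ u θ) :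
    (toepFin d (fun k => cosMom u k)).PosSemidef := by
  refine Matrix.PosSemidef.of_dotProduct_mulVec_nonneg ?_ ?_
  · ext i j
    simp only [toepFin, Matrix.conjTranspose_apply, star_trivial]
    congr 1
    omega
  · intro v
    have key : star v ⬝ᵥ (toepFin d (fun k => cosMom u k)).mulVec v =
        ∫ θ in (0:ℝ)..Real.pi, ((∑ i : Fin (d + 1), v i * Real.cos ((i : ℕ) * θ)) ^ 2 +
          (∑ i : Fin (d + 1), v i * Real.sin ((i : ℕ) * θ)) ^ 2) * u θ := by
      have e : ∀ θ : ℝ, ((∑ i : Fin (d + 1), v i * Real.cos ((i : ℕ) * θ)) ^ 2 +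
          (∑ i : Fin (d + 1), v i * Real.sin ((i : ℕ) * θ)) ^ 2) * u θ =
          ∑ i : Fin (d + 1), ∑ j : Fin (d + 1), v i * v j *
            (Real.cos (((((i : ℕ) : ℤ) - ((j : ℕ) : ℤ)).natAbs : ℕ) * θ) * u θ) := by
        intro θ
        rw [sq, sq, Finset.sum_mul_sum, Finset.sum_mul_sum, ← Finset.sum_add_distrib,
          Finset.sum_mul]
        refine Finset.sum_congr rfl fun i _ => ?_
        rw [← Finset.sum_add_distrib, Finset.sum_mul]
        refine Finset.sum_congr rfl fun j _ => ?_
        have hc : Real.cos (((((i : ℕ) : ℤ) - ((j : ℕ) : ℤ)).natAbs : ℕ) * θ) =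
            Real.cos (((i : ℕ) - (j : ℕ) : ℝ) * θ) := by
          rw [Nat.cast_natAbs]
          push_cast
          rcases abs_choice (((i : ℕ) : ℝ) - (j : ℕ)) with h | h <;> rw [h]
          rw [neg_mul, Real.cos_neg]
        rw [hc, sub_mul, Real.cos_sub]
        ring
      simp_rw [e]
      rw [intervalIntegral.integral_finsetSum]
      · simp only [dotProduct, Matrix.mulVec, Finset.mul_sum, star_trivial]
        refine Finset.sum_congr rfl fun i _ => ?_
        rw [intervalIntegral.integral_finsetSum]
        · refine Finset.sum_congr rfl fun j _ => ?_
          rw [intervalIntegral.integral_const_mul]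
          simp only [toepFin, cosMom]
          ring
        · intro j _
          exact Continuous.intervalIntegrable (by fun_prop) _ _
      · intro j _
        exact Continuous.intervalIntegrable (by fun_prop) _ _
    rw [key]
    refine intervalIntegral.integral_nonneg Real.pi_pos.le ?_
    intro θ hθ
    exact mul_nonneg (by positivity) (hpos θ hθ)

lemma cosMom_add (u v : ℝ → ℝ) (hu : Continuous u) (hv : Continuous v) (k : ℕ) :
    cosMom (fun θ => u θ + v θ) k = cosMom u k + cosMom v k := by
  unfold cosMom
  rw [← intervalIntegral.integral_add (Continuous.intervalIntegrable (by fun_prop) _ _)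
    (Continuous.intervalIntegrable (by fun_prop) _ _)]
  simp only [mul_add]

lemma cosMom_sub (u v : ℝ → ℝ) (hu : Continuous u) (hv : Continuous v) (k : ℕ) :
    cosMom (fun θ => u θ - v θ) k = cosMom u k - cosMom v k := by
  unfold cosMom
  rw [← intervalIntegral.integral_sub (Continuous.intervalIntegrable (by fun_prop) _ _)
    (Continuous.intervalIntegrable (by fun_prop) _ _)]
  simp only [mul_sub]

lemma cosMom_smul (c : ℝ) (v : ℝ → ℝ) (k : ℕ) :
    cosMom (fun θ => c * v θ) k = c * cosMom v k := by
  unfold cosMom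
  rw [← intervalIntegral.integral_const_mul]
  congr 1
  ext θ
  ring

/-- Positive and negative parts give a feasible pair. -/
lemma feas (d : ℕ) (u : ℝ → ℝ) (hu : Continuous u) :
    ∃ yp ym : Fin (d + 1) → ℝ, (toepFin d yp).PosSemidef ∧ (toepFin d ym).PosSemidef ∧
      (∀ k, yp k - ym k = cosMom u (k : ℕ)) ∧
      yp 0 + ym 0 = ∫ θ in (0:ℝ)..Real.pi, |u θ| := by
  have c1 : Continuous fun θ => max (u θ) 0 := by fun_prop
  have c2 : Continuous fun θ => max (-u θ) 0 := by fun_prop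
  refine ⟨fun k => cosMom (fun θ => max (u θ) 0) k, fun k => cosMom (fun θ => max (-u θ) 0) k,
    toep_mom_psd d _ c1 fun θ _ => le_max_right _ _,
    toep_mom_psd d _ c2 fun θ _ => le_max_right _ _, ?_, ?_⟩
  · intro k
    rw [← cosMom_sub _ _ c1 c2]
    congr 1
    ext θ
    rcases le_total (u θ) 0 with h | h <;> simp [h]
  · rw [← cosMom_add _ _ c1 c2]
    simp only [cosMom, Fin.val_zero, Nat.cast_zero, zero_mul, Real.cos_zero, one_mul]
    congr 1
    ext θ
    rcases le_total (u θ) 0 with h | h <;> simp [h, abs_of_nonneg, abs_of_nonpos]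

lemma fej_mom_le (d : ℕ) (u : ℝ → ℝ) (hu : Continuous u) :
    ∫ θ in (0:ℝ)..Real.pi, |fej d (fun k => cosMom u k) θ| ≤
      ∫ θ in (0:ℝ)..Real.pi, |u θ| := by
  obtain ⟨yp, ym, hp, hm, he, h0⟩ := feas d u hu
  rw [← h0]
  have : (fun k : Fin (d + 1) => cosMom u k) = fun k => yp k - ym k := by
    ext k
    rw [he]
  rw [this]
  exact fej_abs_le d yp ym hp hm

/-- The `L¹` error of the Fejér mean. -/
noncomputable def fejErr (d : ℕ) (u : ℝ → ℝ) : ℝ :=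
  ∫ θ in (0:ℝ)..Real.pi, |u θ - fej d (fun k => cosMom u k) θ|

lemma fejErr_nonneg (d : ℕ) (u : ℝ → ℝ) : 0 ≤ fejErr d u :=
  intervalIntegral.integral_nonneg Real.pi_pos.le fun _ _ => abs_nonneg _

lemma fejErr_add (d : ℕ) (u v : ℝ → ℝ) (hu : Continuous u) (hv : Continuous v) :
    fejErr d (fun θ => u θ + v θ) ≤ fejErr d u + fejErr d v := by
  unfold fejErr
  have c1 := fej_continuous d (fun k => cosMom u k)
  have c2 := fej_continuous d (fun k => cosMom v k)
  have c3 := fej_continuous d (fun k => cosMom (fun θ => u θ + v θ) k)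
  rw [← intervalIntegral.integral_add (Continuous.intervalIntegrable (by fun_prop) _ _)
    (Continuous.intervalIntegrable (by fun_prop) _ _)]
  refine intervalIntegral.integral_mono_on Real.pi_pos.le
    (Continuous.intervalIntegrable (by fun_prop) _ _)
    (Continuous.intervalIntegrable (by fun_prop) _ _) fun θ _ => ?_
  simp only [cosMom_add u v hu hv, fej_add]
  refine le_trans (le_of_eq ?_) (abs_add_le _ _)
  congr 1
  ring

lemma fejErr_smul (d : ℕ) (c : ℝ) (u : ℝ → ℝ) :
    fejErr d (fun θ => c * u θ) = |c| * fejErr d u := by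
  unfold fejErr
  rw [← intervalIntegral.integral_const_mul]
  congr 1
  ext θ
  simp only [cosMom_smul, fej_smul]
  rw [← abs_mul, mul_sub]

lemma fejErr_zero (d : ℕ) : fejErr d (fun _ => 0) = 0 := by
  have := fejErr_smul d 0 (fun _ => 0)
  simpa using this

lemma fejErr_sum (d : ℕ) {ι : Type*} (s : Finset ι) (c : ι → ℝ) (e : ι → ℝ → ℝ)
    (he : ∀ i, Continuous (e i)) :
    fejErr d (fun θ => ∑ i ∈ s, c i * e i θ) ≤ ∑ i ∈ s, |c i| * fejErr d (e i) := by
  classical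
  induction s using Finset.induction_on with
  | empty => simp [fejErr_zero]
  | insert i s hi ih =>
    simp only [Finset.sum_insert hi]
    have hc : ∀ i, Continuous fun θ => c i * e i θ := fun i => continuous_const.mul (he i)
    refine (fejErr_add d _ _ (hc i) (continuous_finsetSum _ fun i _ => hc i)).trans ?_
    rw [fejErr_smul]
    gcongr

lemma fejErr_le (d : ℕ) (u : ℝ → ℝ) (hu : Continuous u) :
    fejErr d u ≤ 2 * ∫ θ in (0:ℝ)..Real.pi, |u θ| := by
  have h := fej_mom_le d u hu
  have c1 := fej_continuous d (fun k => cosMom u k)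
  have : fejErr d u ≤ (∫ θ in (0:ℝ)..Real.pi, |u θ|) +
      ∫ θ in (0:ℝ)..Real.pi, |fej d (fun k => cosMom u k) θ| := by
    unfold fejErr
    rw [← intervalIntegral.integral_add (Continuous.intervalIntegrable (by fun_prop) _ _)
      (Continuous.intervalIntegrable (by fun_prop) _ _)]
    exact intervalIntegral.integral_mono_on Real.pi_pos.le
      (Continuous.intervalIntegrable (by fun_prop) _ _)
      (Continuous.intervalIntegrable (by fun_prop) _ _) fun θ _ => abs_sub _ _
  linarith

lemma cos_natAbs_mul (i j : ℕ) (θ : ℝ) :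
    Real.cos ((((i : ℤ) - (j : ℤ)).natAbs : ℕ) * θ) = Real.cos (((i : ℝ) - (j : ℝ)) * θ) := by
  rw [Nat.cast_natAbs]
  push_cast
  rcases abs_choice ((i : ℝ) - j) with h | h <;> rw [h]
  rw [neg_mul, Real.cos_neg]

lemma cosMom_cos (m i j : ℕ) :
    cosMom (fun θ => Real.cos (m * θ)) ((i : ℤ) - (j : ℤ)).natAbs =
      Real.pi / 2 * ((if i = j + m then 1 else 0) + (if j = i + m then 1 else 0)) := by
  unfold cosMom
  simp only [cos_natAbs_mul]
  have e : ∀ θ : ℝ, Real.cos (((i : ℝ) - j) * θ) * Real.cos (m * θ) =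
      1 / 2 * (Real.cos ((((i : ℤ) - j - m : ℤ) : ℝ) * θ) +
        Real.cos ((((i : ℤ) - j + m : ℤ) : ℝ) * θ)) := by
    intro θ
    push_cast
    rw [sub_mul _ (m : ℝ), add_mul _ (m : ℝ), Real.cos_sub (((i : ℝ) - j) * θ),
      Real.cos_add (((i : ℝ) - j) * θ)]
    ring
  simp_rw [e]
  rw [intervalIntegral.integral_const_mul, intervalIntegral.integral_add
    (Continuous.intervalIntegrable (by fun_prop) _ _)
    (Continuous.intervalIntegrable (by fun_prop) _ _), int_cos_int, int_cos_int]
  have h1 : ((i : ℤ) - j - m = 0) ↔ i = j + m := by omega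
  have h2 : ((i : ℤ) - j + m = 0) ↔ j = i + m := by omega
  simp only [h1, h2]
  split_ifs <;> ring

lemma count_aux (d m : ℕ) :
    ∑ i : Fin (d + 1), ∑ j : Fin (d + 1), (if (i : ℕ) = (j : ℕ) + m then (1:ℝ) else 0) =
      ((d + 1 - m : ℕ) : ℝ) := by
  rw [Finset.sum_comm]
  have h1 : ∀ j : Fin (d + 1), ∑ i : Fin (d + 1), (if (i : ℕ) = (j : ℕ) + m then (1:ℝ) else 0) =
      if (j : ℕ) < d + 1 - m then 1 else 0 := by
    intro j
    split_ifs with h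
    · rw [Finset.sum_eq_single (⟨(j : ℕ) + m, by omega⟩ : Fin (d + 1))]
      · simp
      · intro b _ hb
        rw [if_neg]
        intro h'
        exact hb (Fin.ext h')
      · simp
    · refine Finset.sum_eq_zero fun i _ => ?_
      rw [if_neg]
      have := i.2
      omega
  rw [Finset.sum_congr rfl fun j _ => h1 j,
    Fin.sum_univ_eq_sum_range (fun j => if j < d + 1 - m then (1:ℝ) else 0) (d + 1),
    ← Finset.sum_filter]
  have : (Finset.range (d + 1)).filter (fun j => j < d + 1 - m) = Finset.range (d + 1 - m) := by
    ext j
    simp only [Finset.mem_filter, Finset.mem_range]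
    omega
  rw [this]
  simp

lemma fej_cos (d m : ℕ) (θ : ℝ) :
    fej d (fun k => cosMom (fun θ => Real.cos (m * θ)) k) θ =
      ((d + 1 - m : ℕ) : ℝ) / (d + 1) * Real.cos (m * θ) := by
  unfold fej
  have hpi := Real.pi_pos
  have e : ∀ i j : Fin (d + 1),
      toepFin d (fun k => cosMom (fun θ => Real.cos (m * θ)) k) i j *
        Real.cos (((i : ℕ) - (j : ℕ) : ℝ) * θ) =
      Real.pi / 2 * Real.cos (m * θ) * (if (i : ℕ) = (j : ℕ) + m then (1:ℝ) else 0) +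
      Real.pi / 2 * Real.cos (m * θ) * (if (j : ℕ) = (i : ℕ) + m then (1:ℝ) else 0) := by
    intro i j
    have : toepFin d (fun k => cosMom (fun θ => Real.cos (m * θ)) k) i j = _ :=
      cosMom_cos m i j
    rw [this]
    have a1 : (i : ℕ) = (j : ℕ) + m →
        Real.cos (((i : ℕ) - (j : ℕ) : ℝ) * θ) = Real.cos (m * θ) := by
      intro h
      rw [h]
      push_cast
      congr 1
      ring
    have a2 : (j : ℕ) = (i : ℕ) + m →
        Real.cos (((i : ℕ) - (j : ℕ) : ℝ) * θ) = Real.cos (m * θ) := by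
      intro h
      rw [h, ← Real.cos_neg]
      push_cast
      congr 1
      ring
    split_ifs with h1 h2 h2
    · rw [a1 h1]; ring
    · rw [a1 h1]; ring
    · rw [a2 h2]; ring
    · ring
  simp only [e, Finset.sum_add_distrib, ← Finset.mul_sum]
  rw [count_aux, Finset.sum_comm, count_aux]
  field_simp
  ring

lemma fejErr_cos (m : ℕ) :
    Tendsto (fun d => fejErr d (fun θ => Real.cos (m * θ))) atTop (nhds 0) := by
  have h0 : ∀ d : ℕ, m ≤ d → fejErr d (fun θ => Real.cos (m * θ)) ≤ (m * Real.pi) / ((d : ℝ) + 1) := by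
    intro d hd
    unfold fejErr
    have hb : ∀ θ ∈ Set.uIoc (0:ℝ) Real.pi,
        ‖|Real.cos (m * θ) - fej d (fun k => cosMom (fun θ => Real.cos (m * θ)) k) θ|‖ ≤
          m / ((d : ℝ) + 1) := by
      intro θ _
      rw [fej_cos, Nat.cast_sub (by omega)]
      have : Real.cos (m * θ) - (((d + 1 : ℕ) : ℝ) - m) / (d + 1) * Real.cos (m * θ) =
          m / ((d : ℝ) + 1) * Real.cos (m * θ) := by
        push_cast
        field_simp
        ring
      rw [this, norm_abs_eq_norm, Real.norm_eq_abs, abs_mul,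
        abs_of_nonneg (show (0:ℝ) ≤ m / ((d : ℝ) + 1) by positivity)]
      exact mul_le_of_le_one_right (by positivity) (Real.abs_cos_le_one _)
    have := intervalIntegral.norm_integral_le_of_norm_le_const hb
    rw [sub_zero, abs_of_pos Real.pi_pos] at this
    refine (le_abs_self _).trans (this.trans (le_of_eq ?_))
    ring
  refine squeeze_zero' (Eventually.of_forall fun d => fejErr_nonneg d _)
    ((eventually_ge_atTop m).mono h0) ?_
  exact Tendsto.div_atTop tendsto_const_nhds
    (tendsto_atTop_add_const_right _ _ tendsto_natCast_atTop_atTop)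

lemma fejErr_cospow (n : ℕ) : ∀ m : ℕ,
    Tendsto (fun d => fejErr d (fun θ => Real.cos θ ^ n * Real.cos (m * θ))) atTop (nhds 0) := by
  induction n with
  | zero => intro m; simpa using fejErr_cos m
  | succ n ih =>
    intro m
    rcases m with _ | m
    · have := ih 1
      refine this.congr fun d => ?_
      congr 1
      ext θ
      simp [pow_succ]
    · have h := ((ih (m + 2)).const_mul (1/2)).add ((ih m).const_mul (1/2))
      simp only [mul_zero, add_zero] at h
      refine squeeze_zero (fun d => fejErr_nonneg d _) (fun d => ?_) h
      have e : (fun θ : ℝ => Real.cos θ ^ (n + 1) * Real.cos ((m + 1 : ℕ) * θ)) =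
          fun θ => (1/2) * (Real.cos θ ^ n * Real.cos ((m + 2 : ℕ) * θ)) +
            (1/2) * (Real.cos θ ^ n * Real.cos (m * θ)) := by
        ext θ
        have a1 : ((m + 2 : ℕ) : ℝ) * θ = ((m + 1 : ℕ) : ℝ) * θ + θ := by push_cast; ring
        have a2 : (m : ℝ) * θ = ((m + 1 : ℕ) : ℝ) * θ - θ := by push_cast; ring
        rw [a1, a2, Real.cos_add, Real.cos_sub]
        ring
      rw [e]
      refine (fejErr_add d _ _ (by fun_prop) (by fun_prop)).trans (le_of_eq ?_)
      rw [fejErr_smul, fejErr_smul]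
      norm_num

lemma fejErr_poly (p : Polynomial ℝ) :
    Tendsto (fun d => fejErr d (fun θ => p.eval (Real.cos θ))) atTop (nhds 0) := by
  have h : Tendsto (fun d => ∑ i ∈ Finset.range (p.natDegree + 1),
      |p.coeff i| * fejErr d (fun θ => Real.cos θ ^ i)) atTop (nhds 0) := by
    have : (0:ℝ) = ∑ i ∈ Finset.range (p.natDegree + 1), |p.coeff i| * 0 := by simp
    rw [this]
    refine tendsto_finsetSum _ fun i _ => Tendsto.const_mul _ ?_
    have := fejErr_cospow i 0
    simpa using this
  refine squeeze_zero (fun d => fejErr_nonneg d _) (fun d => ?_) h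
  simp only [Polynomial.eval_eq_sum_range]
  exact fejErr_sum d _ _ (fun i θ => Real.cos θ ^ i) fun i => by fun_prop

lemma fejErr_tendsto (u : ℝ → ℝ) (hu : Continuous u) :
    Tendsto (fun d => fejErr d u) atTop (nhds 0) := by
  rw [Metric.tendsto_atTop]
  intro ε hε
  have hpi := Real.pi_pos
  obtain ⟨p, hp⟩ := exists_polynomial_near_of_continuousOn (-1) 1 (fun x => u (Real.arccos x))
    (hu.comp Real.continuous_arccos).continuousOn (ε / (4 * Real.pi)) (by positivity)
  obtain ⟨D, hD⟩ := (Metric.tendsto_atTop.1 (fejErr_poly p)) (ε / 2) (by positivity)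
  refine ⟨D, fun d hd => ?_⟩
  have h1 := hD d hd
  rw [Real.dist_eq, sub_zero, abs_of_nonneg (fejErr_nonneg _ _)] at h1 ⊢
  have cp : Continuous fun θ => p.eval (Real.cos θ) := by fun_prop
  have h2 := fejErr_add d (fun θ => p.eval (Real.cos θ)) (fun θ => u θ - p.eval (Real.cos θ))
    cp (by fun_prop)
  simp only [add_sub_cancel] at h2
  have h3 := fejErr_le d (fun θ => u θ - p.eval (Real.cos θ)) (by fun_prop)
  have hb : ∀ θ ∈ Set.uIoc (0:ℝ) Real.pi, ‖|u θ - p.eval (Real.cos θ)|‖ ≤ ε / (4 * Real.pi) := by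
    intro θ hθ
    rw [Set.uIoc_of_le hpi.le] at hθ
    have := hp (Real.cos θ) ⟨Real.neg_one_le_cos θ, Real.cos_le_one θ⟩
    rw [Real.arccos_cos hθ.1.le hθ.2, abs_sub_comm] at this
    rw [norm_abs_eq_norm]
    exact this.le
  have h4 := intervalIntegral.norm_integral_le_of_norm_le_const hb
  rw [sub_zero, abs_of_pos hpi] at h4
  have h5 := (le_abs_self _).trans h4
  have h6 : ε / (4 * Real.pi) * Real.pi = ε / 4 := by field_simp
  rw [h6] at h5
  linarith

/-- The integrand on `[0, π]` after the substitution `t = φ(cos θ)`. -/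
noncomputable def gf (a b : ℝ) (w : ℝ → ℝ) (P : Polynomial ℝ) (θ : ℝ) : ℝ :=
  P.eval (((b - a) * Real.cos θ + a + b) / 2) * Real.sin θ /
    w (((b - a) * Real.cos θ + a + b) / 2)

lemma phi_mem {a b : ℝ} (hab : a < b) (θ : ℝ) :
    ((b - a) * Real.cos θ + a + b) / 2 ∈ Set.Icc a b := by
  have h1 := Real.neg_one_le_cos θ
  have h2 := Real.cos_le_one θ
  constructor <;> nlinarith

lemma w_cont {a b : ℝ} (hab : a < b) {w : ℝ → ℝ} (hw : ContinuousOn w (Set.Icc a b)) :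
    Continuous fun θ => w (((b - a) * Real.cos θ + a + b) / 2) :=
  hw.comp_continuous (by fun_prop) (phi_mem hab)

lemma gf_cont {a b : ℝ} (hab : a < b) {w : ℝ → ℝ} (hw : ContinuousOn w (Set.Icc a b))
    (hpos : ∀ x ∈ Set.Icc a b, 0 < w x) (P : Polynomial ℝ) : Continuous (gf a b w P) := by
  unfold gf
  exact Continuous.div (by fun_prop) (w_cont hab hw) fun θ => (hpos _ (phi_mem hab θ)).ne'

lemma jent_sum {a b : ℝ} (hab : a < b) {w : ℝ → ℝ} (hw : ContinuousOn w (Set.Icc a b))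
    (hpos : ∀ x ∈ Set.Icc a b, 0 < w x) (P : Polynomial ℝ) (N : ℕ) (q : Fin (N + 1) → ℝ)
    (hq : transplant a b P
      = ∑ n : Fin (N + 1), Polynomial.C (q n) * Polynomial.Chebyshev.U ℝ ((n : ℕ) : ℤ)) (k : ℕ) :
    ∑ n : Fin (N + 1), Jent a b w k (n : ℕ) * q n = cosMom (gf a b w P) k := by
  have hc := w_cont hab hw
  have hne : ∀ θ, w (((b - a) * Real.cos θ + a + b) / 2) ≠ 0 :=
    fun θ => (hpos _ (phi_mem hab θ)).ne'
  unfold cosMom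
  have e : ∀ θ, Real.cos (k * θ) * gf a b w P θ = ∑ n : Fin (N + 1),
      Real.cos (k * θ) * Real.sin (((n : ℕ) + 1) * θ) /
        w (((b - a) * Real.cos θ + a + b) / 2) * q n := by
    intro θ
    have h1 := congrArg (Polynomial.eval (Real.cos θ)) hq
    rw [transplant, Polynomial.eval_comp, Polynomial.eval_finsetSum] at h1
    simp only [Polynomial.eval_add, Polynomial.eval_mul, Polynomial.eval_C, Polynomial.eval_X] at h1
    have h2 : ((b - a) * Real.cos θ + a + b) / 2 = (b - a) / 2 * Real.cos θ + (a + b) / 2 := by ring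
    unfold gf
    rw [h2, h1, Finset.sum_mul, Finset.sum_div, Finset.mul_sum]
    refine Finset.sum_congr rfl fun n _ => ?_
    have h3 := Polynomial.Chebyshev.U_real_cos θ ((n : ℕ) : ℤ)
    push_cast at h3
    rw [← h3]
    ring
  simp_rw [e]
  rw [intervalIntegral.integral_finsetSum]
  · simp only [intervalIntegral.integral_mul_const, Jent]
  · intro n _
    refine Continuous.intervalIntegrable ?_ _ _
    exact (Continuous.div (by fun_prop) hc hne).mul continuous_const

lemma cov {a b : ℝ} (hab : a < b) {w : ℝ → ℝ} (hw : ContinuousOn w (Set.Icc a b))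
    (hpos : ∀ x ∈ Set.Icc a b, 0 < w x) (P : Polynomial ℝ) :
    ∫ t in a..b, |P.eval t| / w t = (b - a) / 2 * ∫ θ in (0:ℝ)..Real.pi, |gf a b w P θ| := by
  have h := intervalIntegral.integral_comp_mul_deriv'' (a := 0) (b := Real.pi)
    (f := fun θ => ((b - a) * Real.cos θ + a + b) / 2)
    (f' := fun θ => ((b - a) * (- Real.sin θ)) / 2) (g := fun t => |P.eval t| / w t)
    (Continuous.continuousOn (by fun_prop))
    (fun θ _ => by
      have := ((((Real.hasDerivAt_cos θ).const_mul (b - a)).add_const a).add_const b).div_const 2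
      exact this.hasDerivWithinAt)
    (Continuous.continuousOn (by fun_prop))
    (by
      have : ContinuousOn (fun t => |P.eval t| / w t) (Set.Icc a b) :=
        ContinuousOn.div (Continuous.continuousOn (by fun_prop)) hw fun x hx => (hpos x hx).ne'
      refine this.mono ?_
      rintro _ ⟨θ, _, rfl⟩
      exact phi_mem hab θ)
  simp only [Real.cos_zero, Real.cos_pi] at h
  rw [show ((b - a) * 1 + a + b) / 2 = b by ring, show ((b - a) * -1 + a + b) / 2 = a by ring,
    intervalIntegral.integral_symm a b] at h
  rw [← neg_inj, ← h, ← intervalIntegral.integral_const_mul, ← intervalIntegral.integral_neg]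
  refine intervalIntegral.integral_congr fun θ hθ => ?_
  rw [Set.uIcc_of_le Real.pi_pos.le] at hθ
  have hs := Real.sin_nonneg_of_nonneg_of_le_pi hθ.1 hθ.2
  simp only [Function.comp, gf]
  rw [abs_div, abs_mul, abs_of_nonneg hs, abs_of_pos (hpos _ (phi_mem hab θ))]
  ring

lemma exists_U (N : ℕ) : ∀ Q : Polynomial ℝ, Q.natDegree ≤ N → ∃ q : Fin (N + 1) → ℝ,
    Q = ∑ n : Fin (N + 1), Polynomial.C (q n) * Polynomial.Chebyshev.U ℝ ((n : ℕ) : ℤ) := by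
  induction N with
  | zero =>
    intro Q hQ
    refine ⟨fun _ => Q.coeff 0, ?_⟩
    rw [Polynomial.eq_C_of_natDegree_le_zero hQ]
    simp
  | succ N ih =>
    intro Q hQ
    set U := Polynomial.Chebyshev.U ℝ ((N + 1 : ℕ) : ℤ) with hU
    have hd : U.natDegree = N + 1 := Polynomial.Chebyshev.natDegree_U_natCast ℝ (N + 1)
    have hl : U.coeff (N + 1) ≠ 0 := by
      rw [← hd]
      change U.leadingCoeff ≠ 0
      rw [Polynomial.leadingCoeff_ne_zero]
      intro h0
      rw [h0] at hd
      simp at hd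
    obtain ⟨q, hq⟩ := ih (Q - Polynomial.C (Q.coeff (N + 1) / U.coeff (N + 1)) * U) (by
      rw [Polynomial.natDegree_le_iff_coeff_eq_zero]
      intro n hn
      rw [Polynomial.coeff_sub, Polynomial.coeff_C_mul]
      rcases eq_or_lt_of_le (Nat.succ_le_of_lt hn) with h | h
      · rw [← h]
        simp only [Nat.succ_eq_add_one]
        field_simp
        ring
      · rw [Polynomial.coeff_eq_zero_of_natDegree_lt (lt_of_le_of_lt hQ h),
          Polynomial.coeff_eq_zero_of_natDegree_lt (p := U) (lt_of_le_of_lt hd.le h)]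
        simp)
    refine ⟨Fin.snoc q (Q.coeff (N + 1) / U.coeff (N + 1)), ?_⟩
    rw [Fin.sum_univ_castSucc]
    simp only [Fin.snoc_castSucc, Fin.snoc_last, Fin.val_castSucc, Fin.val_last]
    rw [← hq, ← hU]
    ring

lemma transplant_natDegree (a b : ℝ) (P : Polynomial ℝ) :
    (transplant a b P).natDegree ≤ P.natDegree := by
  unfold transplant
  refine Polynomial.natDegree_comp_le.trans ?_
  have : (Polynomial.C ((b - a) / 2) * Polynomial.X + Polynomial.C ((a + b) / 2)).natDegree ≤ 1 :=
    Polynomial.natDegree_linear_le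
  calc _ ≤ P.natDegree * 1 := Nat.mul_le_mul_left _ this
    _ = _ := mul_one _

lemma gf_sum (a b : ℝ) (w : ℝ → ℝ) (N : ℕ) (P : Polynomial ℝ) (hP : P.natDegree ≤ N) :
    gf a b w P = fun θ => ∑ n ∈ Finset.range (N + 1), P.coeff n * gf a b w (Polynomial.X ^ n) θ := by
  ext θ
  unfold gf
  rw [Polynomial.eval_eq_sum_range' (Nat.lt_succ_of_le hP), Finset.sum_mul, Finset.sum_div]
  refine Finset.sum_congr rfl fun n _ => ?_
  simp
  ring

lemma norm_equiv {a b : ℝ} (hab : a < b) {w : ℝ → ℝ} (hw : ContinuousOn w (Set.Icc a b))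
    (hpos : ∀ x ∈ Set.Icc a b, 0 < w x) (N : ℕ) :
    ∃ C : ℝ, 0 ≤ C ∧ ∀ P : Polynomial ℝ, P.natDegree ≤ N →
      ∑ n ∈ Finset.range (N + 1), |P.coeff n| ≤ C * ∫ θ in (0:ℝ)..Real.pi, |gf a b w P θ| := by
  let F : (Fin (N + 1) → ℝ) → ℝ := fun p =>
    ∫ θ in (0:ℝ)..Real.pi, |∑ n : Fin (N + 1), p n * gf a b w (Polynomial.X ^ (n : ℕ)) θ|
  have hgc : ∀ n : ℕ, Continuous (gf a b w (Polynomial.X ^ n)) := fun n => gf_cont hab hw hpos _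
  have hF : Continuous F := by
    refine intervalIntegral.continuous_parametric_intervalIntegral_of_continuous' ?_ _ _
    unfold Function.uncurry
    refine Continuous.abs (continuous_finsetSum _ fun n _ => ?_)
    exact ((continuous_apply n).comp continuous_fst).mul ((hgc n).comp continuous_snd)
  have hFP : ∀ P : Polynomial ℝ, P.natDegree ≤ N →
      ∫ θ in (0:ℝ)..Real.pi, |gf a b w P θ| = F fun n => P.coeff n := by
    intro P hP
    simp only [F]
    rw [gf_sum a b w N P hP]
    simp only [Finset.sum_range]
  have hFpos : ∀ p, p ≠ 0 → 0 < F p := by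
    intro p hp
    refine lt_of_le_of_ne (intervalIntegral.integral_nonneg Real.pi_pos.le
      fun _ _ => abs_nonneg _) ?_
    intro h0
    apply hp
    let P : Polynomial ℝ := ∑ n : Fin (N + 1), Polynomial.C (p n) * Polynomial.X ^ (n : ℕ)
    have hPc : ∀ n : Fin (N + 1), P.coeff n = p n := by
      intro n
      simp only [P, Polynomial.finsetSum_coeff, Polynomial.coeff_C_mul, Polynomial.coeff_X_pow]
      rw [Finset.sum_eq_single n]
      · simp
      · intro m _ hm
        rw [if_neg, mul_zero]
        intro h
        exact hm (Fin.ext h.symm)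
      · simp
    have hPd : P.natDegree ≤ N := by
      refine Polynomial.natDegree_sum_le_of_forall_le _ _ fun n _ => ?_
      exact (Polynomial.natDegree_C_mul_X_pow_le _ _).trans (Nat.le_of_lt_succ n.2)
    have hI : ∫ θ in (0:ℝ)..Real.pi, |gf a b w P θ| = 0 := by
      rw [hFP P hPd, h0]
      simp only [hPc]
    have hc : Continuous fun θ => |gf a b w P θ| := (gf_cont hab hw hpos P).abs
    have hz : ∀ θ ∈ Set.Ioo (0:ℝ) Real.pi, gf a b w P θ = 0 := by
      intro θ hθ
      by_contra hne
      have := intervalIntegral.integral_pos Real.pi_pos hc.continuousOn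
        (fun _ _ => abs_nonneg _) ⟨θ, ⟨hθ.1.le, hθ.2.le⟩, abs_pos.2 hne⟩
      exact this.ne' hI
    have hP0 : P = 0 := by
      refine Polynomial.eq_zero_of_infinite_isRoot P ?_
      refine Set.Infinite.mono (s := Set.Ioo a b) ?_ (Set.Ioo_infinite hab)
      intro t ht
      set x := (2 * t - a - b) / (b - a) with hx
      have hba : 0 < b - a := sub_pos.2 hab
      have hx1 : -1 < x := by
        rw [hx, lt_div_iff₀ hba]; linarith [ht.1]
      have hx2 : x < 1 := by
        rw [hx, div_lt_iff₀ hba]; linarith [ht.2]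
      have hθ : Real.arccos x ∈ Set.Ioo (0:ℝ) Real.pi := by
        refine ⟨Real.arccos_pos.2 hx2, lt_of_le_of_ne (Real.arccos_le_pi x) ?_⟩
        rw [Ne, Real.arccos_eq_pi]
        linarith
      have h1 := hz _ hθ
      unfold gf at h1
      rw [Real.cos_arccos hx1.le hx2.le] at h1
      have h2 : ((b - a) * x + a + b) / 2 = t := by
        rw [hx]
        field_simp
        ring
      rw [h2] at h1
      have h3 : w t ≠ 0 := (hpos t ⟨ht.1.le, ht.2.le⟩).ne'
      have h4 : Real.sin (Real.arccos x) ≠ 0 := (Real.sin_pos_of_pos_of_lt_pi hθ.1 hθ.2).ne'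
      simpa [h3, h4] using h1
    ext n
    rw [← hPc n, hP0]
    simp
  have hFsmul : ∀ (c : ℝ) p, F (c • p) = |c| * F p := by
    intro c p
    simp only [F]
    rw [← intervalIntegral.integral_const_mul]
    congr 1
    ext θ
    rw [← abs_mul, Finset.mul_sum]
    simp [mul_assoc]
  obtain ⟨p0, hp0, hmin⟩ := (isCompact_sphere (0 : Fin (N + 1) → ℝ) 1).exists_isMinOn
    (NormedSpace.sphere_nonempty.2 zero_le_one) hF.continuousOn
  have hp0ne : p0 ≠ 0 := by
    rintro rfl
    simp at hp0
  have hc0 := hFpos p0 hp0ne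
  refine ⟨(N + 1) / F p0, by positivity, fun P hP => ?_⟩
  rw [hFP P hP]
  set p : Fin (N + 1) → ℝ := fun n => P.coeff n with hp
  have hle : ‖p‖ * F p0 ≤ F p := by
    by_cases h : p = 0
    · have : F p = 0 := by rw [h]; simp [F]
      rw [this, h]
      simp
    · have hn : 0 < ‖p‖ := norm_pos_iff.2 h
      have hm := hmin (show ‖p‖⁻¹ • p ∈ Metric.sphere (0 : Fin (N + 1) → ℝ) 1 by
        rw [mem_sphere_zero_iff_norm, norm_smul, norm_inv, norm_norm, inv_mul_cancel₀ hn.ne'])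
      simp only [Set.mem_ofPred_eq] at hm
      rw [hFsmul, abs_of_pos (inv_pos.2 hn)] at hm
      calc ‖p‖ * F p0 ≤ ‖p‖ * (‖p‖⁻¹ * F p) := by gcongr
        _ = F p := by field_simp
  have hsum : ∑ n ∈ Finset.range (N + 1), |P.coeff n| ≤ (N + 1) * ‖p‖ := by
    have : ∀ n ∈ Finset.range (N + 1), |P.coeff n| ≤ ‖p‖ := by
      intro n hn
      exact norm_le_pi_norm p ⟨n, Finset.mem_range.1 hn⟩
    refine (Finset.sum_le_card_nsmul _ _ _ this).trans (le_of_eq ?_)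
    simp
  calc _ ≤ (N + 1) * ‖p‖ := hsum
    _ ≤ (N + 1) * (F p / F p0) := by
      gcongr
      rw [le_div_iff₀ hc0]
      exact hle
    _ = _ := by ring

/-- The set of objective values of feasible points in the definition of the ersatz norm. -/
def erSet (L N d : ℕ) (a b : ℕ → ℝ) (w : ℝ → ℝ) (P : Polynomial ℝ) : Set ℝ :=
  { s : ℝ |
    ∃ q : ℕ → Fin (N + 1) → ℝ,
      (∀ ℓ < L, transplant (a ℓ) (b ℓ) P
          = ∑ n : Fin (N + 1), Polynomial.C (q ℓ n) * Polynomial.Chebyshev.U ℝ ((n : ℕ) : ℤ)) ∧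
      ∃ yp ym : ℕ → Fin (d + 1) → ℝ,
        (∀ ℓ < L, ∀ k : Fin (d + 1),
            yp ℓ k - ym ℓ k
              = ∑ n : Fin (N + 1), Jent (a ℓ) (b ℓ) w (k : ℕ) (n : ℕ) * q ℓ n) ∧
        (∀ ℓ < L, (toepFin d (yp ℓ)).PosSemidef ∧ (toepFin d (ym ℓ)).PosSemidef) ∧
        s = ∑ ℓ ∈ Finset.range L, ((b ℓ - a ℓ) / 2) * (yp ℓ 0 + ym ℓ 0) }

lemma ersatz_eq (L N d : ℕ) (a b : ℕ → ℝ) (w : ℝ → ℝ) (P : Polynomial ℝ) :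
    ersatz L N d a b w P = sInf (erSet L N d a b w P) := rfl

lemma psd_zero_nonneg {d : ℕ} {y : Fin (d + 1) → ℝ} (h : (toepFin d y).PosSemidef) : 0 ≤ y 0 := by
  have := h.diag_nonneg (i := 0)
  simpa [toepFin] using this

lemma erSet_nonneg {L N d : ℕ} {a b : ℕ → ℝ} {w : ℝ → ℝ} {P : Polynomial ℝ}
    (hab : ∀ ℓ < L, a ℓ < b ℓ) {s : ℝ} (hs : s ∈ erSet L N d a b w P) : 0 ≤ s := by
  obtain ⟨q, _, yp, ym, _, hpsd, rfl⟩ := hs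
  refine Finset.sum_nonneg fun ℓ hℓ => ?_
  have hℓ' := Finset.mem_range.1 hℓ
  have := hab ℓ hℓ'
  exact mul_nonneg (by linarith)
    (add_nonneg (psd_zero_nonneg (hpsd ℓ hℓ').1) (psd_zero_nonneg (hpsd ℓ hℓ').2))

lemma erSet_succ {L N d : ℕ} {a b : ℕ → ℝ} {w : ℝ → ℝ} {P : Polynomial ℝ}
    {s : ℝ} (hs : s ∈ erSet L N (d + 1) a b w P) : s ∈ erSet L N d a b w P := by
  obtain ⟨q, hq, yp, ym, he, hpsd, rfl⟩ := hs
  refine ⟨q, hq, fun ℓ k => yp ℓ k.castSucc, fun ℓ k => ym ℓ k.castSucc, ?_, ?_, ?_⟩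
  · intro ℓ hℓ k
    exact he ℓ hℓ k.castSucc
  · intro ℓ hℓ
    exact ⟨(hpsd ℓ hℓ).1.submatrix Fin.castSucc, (hpsd ℓ hℓ).2.submatrix Fin.castSucc⟩
  · simp

lemma L1K_eq {L : ℕ} {a b : ℕ → ℝ} {w : ℝ → ℝ} (hab : ∀ ℓ < L, a ℓ < b ℓ)
    (hw : ∀ ℓ < L, ContinuousOn w (Set.Icc (a ℓ) (b ℓ)))
    (hpos : ∀ ℓ < L, ∀ x ∈ Set.Icc (a ℓ) (b ℓ), 0 < w x) (P : Polynomial ℝ) :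
    L1K L a b w P = ∑ ℓ ∈ Finset.range L,
      (b ℓ - a ℓ) / 2 * ∫ θ in (0:ℝ)..Real.pi, |gf (a ℓ) (b ℓ) w P θ| := by
  unfold L1K
  refine Finset.sum_congr rfl fun ℓ hℓ => ?_
  have hℓ' := Finset.mem_range.1 hℓ
  exact cov (hab ℓ hℓ') (hw ℓ hℓ') (hpos ℓ hℓ') P

lemma L1K_mem {L : ℕ} {a b : ℕ → ℝ} {w : ℝ → ℝ} (hab : ∀ ℓ < L, a ℓ < b ℓ)
    (hw : ∀ ℓ < L, ContinuousOn w (Set.Icc (a ℓ) (b ℓ)))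
    (hpos : ∀ ℓ < L, ∀ x ∈ Set.Icc (a ℓ) (b ℓ), 0 < w x) (N d : ℕ) (P : Polynomial ℝ)
    (hP : P.natDegree ≤ N) : L1K L a b w P ∈ erSet L N d a b w P := by
  have hq : ∀ ℓ, ∃ q : Fin (N + 1) → ℝ, transplant (a ℓ) (b ℓ) P
      = ∑ n : Fin (N + 1), Polynomial.C (q n) * Polynomial.Chebyshev.U ℝ ((n : ℕ) : ℤ) :=
    fun ℓ => exists_U N _ ((transplant_natDegree _ _ P).trans hP)
  choose q hq using hq
  have hy : ∀ ℓ, ∃ yp ym : Fin (d + 1) → ℝ, ℓ < L →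
      ((toepFin d yp).PosSemidef ∧ (toepFin d ym).PosSemidef ∧
      (∀ k, yp k - ym k = cosMom (gf (a ℓ) (b ℓ) w P) (k : ℕ)) ∧
      yp 0 + ym 0 = ∫ θ in (0:ℝ)..Real.pi, |gf (a ℓ) (b ℓ) w P θ|) := by
    intro ℓ
    by_cases h : ℓ < L
    · obtain ⟨yp, ym, hh⟩ := feas d _ (gf_cont (hab ℓ h) (hw ℓ h) (hpos ℓ h) P)
      exact ⟨yp, ym, fun _ => hh⟩
    · exact ⟨0, 0, fun h' => absurd h' h⟩
  choose yp ym hy using hy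
  refine ⟨q, fun ℓ _ => hq ℓ, yp, ym, ?_, ?_, ?_⟩
  · intro ℓ hℓ k
    rw [jent_sum (hab ℓ hℓ) (hw ℓ hℓ) (hpos ℓ hℓ) P N (q ℓ) (hq ℓ), (hy ℓ hℓ).2.2.1]
  · intro ℓ hℓ
    exact ⟨(hy ℓ hℓ).1, (hy ℓ hℓ).2.1⟩
  · rw [L1K_eq hab hw hpos]
    refine Finset.sum_congr rfl fun ℓ hℓ => ?_
    rw [(hy ℓ (Finset.mem_range.1 hℓ)).2.2.2]

/-- The uniform Fejér error. -/
noncomputable def delta (L N : ℕ) (a b : ℕ → ℝ) (w : ℝ → ℝ) (d : ℕ) : ℝ :=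
  ∑ ℓ ∈ Finset.range L, (b ℓ - a ℓ) / 2 *
    ∑ n ∈ Finset.range (N + 1), fejErr d (gf (a ℓ) (b ℓ) w (Polynomial.X ^ n))

lemma erSet_lower {L : ℕ} {a b : ℕ → ℝ} {w : ℝ → ℝ} (hab : ∀ ℓ < L, a ℓ < b ℓ)
    (hw : ∀ ℓ < L, ContinuousOn w (Set.Icc (a ℓ) (b ℓ)))
    (hpos : ∀ ℓ < L, ∀ x ∈ Set.Icc (a ℓ) (b ℓ), 0 < w x) (N d : ℕ) (P : Polynomial ℝ)
    (hP : P.natDegree ≤ N) {s : ℝ} (hs : s ∈ erSet L N d a b w P) :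
    L1K L a b w P ≤ s + delta L N a b w d * ∑ n ∈ Finset.range (N + 1), |P.coeff n| := by
  obtain ⟨q, hq, yp, ym, he, hpsd, rfl⟩ := hs
  rw [L1K_eq hab hw hpos, delta, Finset.sum_mul, ← Finset.sum_add_distrib]
  refine Finset.sum_le_sum fun ℓ hℓ' => ?_
  have hℓ := Finset.mem_range.1 hℓ'
  rw [mul_assoc, ← mul_add]
  refine mul_le_mul_of_nonneg_left ?_ (by linarith [hab ℓ hℓ])
  set g := gf (a ℓ) (b ℓ) w P with hg
  have hgc : Continuous g := gf_cont (hab ℓ hℓ) (hw ℓ hℓ) (hpos ℓ hℓ) P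
  have hmom : (fun k : Fin (d + 1) => yp ℓ k - ym ℓ k) = fun k : Fin (d + 1) => cosMom g k := by
    ext k
    rw [he ℓ hℓ k, jent_sum (hab ℓ hℓ) (hw ℓ hℓ) (hpos ℓ hℓ) P N (q ℓ) (hq ℓ hℓ)]
  have h1 := fej_abs_le d (yp ℓ) (ym ℓ) (hpsd ℓ hℓ).1 (hpsd ℓ hℓ).2
  rw [hmom] at h1
  have c1 := fej_continuous d (fun k => cosMom g k)
  have h2 : ∫ θ in (0:ℝ)..Real.pi, |g θ| ≤
      (∫ θ in (0:ℝ)..Real.pi, |fej d (fun k => cosMom g k) θ|) + fejErr d g := by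
    unfold fejErr
    rw [← intervalIntegral.integral_add (Continuous.intervalIntegrable (by fun_prop) _ _)
      (Continuous.intervalIntegrable (by fun_prop) _ _)]
    refine intervalIntegral.integral_mono_on Real.pi_pos.le
      (Continuous.intervalIntegrable (by fun_prop) _ _)
      (Continuous.intervalIntegrable (by fun_prop) _ _) fun θ _ => ?_
    refine le_trans (le_of_eq ?_) (abs_add_le _ _)
    congr 1
    ring
  have h3 : fejErr d g ≤ (∑ n ∈ Finset.range (N + 1),
      fejErr d (gf (a ℓ) (b ℓ) w (Polynomial.X ^ n))) *
        ∑ n ∈ Finset.range (N + 1), |P.coeff n| := by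
    rw [hg, gf_sum _ _ w N P hP]
    refine (fejErr_sum d _ _ _ fun n => gf_cont (hab ℓ hℓ) (hw ℓ hℓ) (hpos ℓ hℓ) _).trans ?_
    rw [Finset.mul_sum]
    refine Finset.sum_le_sum fun n hn => ?_
    rw [mul_comm]
    refine mul_le_mul_of_nonneg_right ?_ (abs_nonneg _)
    exact Finset.single_le_sum
      (f := fun n => fejErr d (gf (a ℓ) (b ℓ) w (Polynomial.X ^ n)))
      (fun n _ => fejErr_nonneg d _) hn
  linarith

lemma delta_tendsto {L : ℕ} {a b : ℕ → ℝ} {w : ℝ → ℝ} (hab : ∀ ℓ < L, a ℓ < b ℓ)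
    (hw : ∀ ℓ < L, ContinuousOn w (Set.Icc (a ℓ) (b ℓ)))
    (hpos : ∀ ℓ < L, ∀ x ∈ Set.Icc (a ℓ) (b ℓ), 0 < w x) (N : ℕ) :
    Tendsto (delta L N a b w) atTop (nhds 0) := by
  have : (0:ℝ) = ∑ ℓ ∈ Finset.range L, (b ℓ - a ℓ) / 2 *
    ∑ n ∈ Finset.range (N + 1), 0 := by simp
  rw [this]
  refine tendsto_finsetSum _ fun ℓ hℓ' => Tendsto.const_mul _ (tendsto_finsetSum _ fun n _ => ?_)
  have hℓ := Finset.mem_range.1 hℓ'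
  exact fejErr_tendsto _ (gf_cont (hab ℓ hℓ) (hw ℓ hℓ) (hpos ℓ hℓ) _)

lemma delta_nonneg {L : ℕ} {a b : ℕ → ℝ} {w : ℝ → ℝ} (hab : ∀ ℓ < L, a ℓ < b ℓ) (N d : ℕ) :
    0 ≤ delta L N a b w d := by
  refine Finset.sum_nonneg fun ℓ hℓ => mul_nonneg ?_
    (Finset.sum_nonneg fun n _ => fejErr_nonneg _ _)
  linarith [hab ℓ (Finset.mem_range.1 hℓ)]

lemma norm_equiv_K {L : ℕ} (hL : 0 < L) {a b : ℕ → ℝ} {w : ℝ → ℝ} (hab : ∀ ℓ < L, a ℓ < b ℓ)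
    (hw : ∀ ℓ < L, ContinuousOn w (Set.Icc (a ℓ) (b ℓ)))
    (hpos : ∀ ℓ < L, ∀ x ∈ Set.Icc (a ℓ) (b ℓ), 0 < w x) (N : ℕ) :
    ∃ C : ℝ, 0 ≤ C ∧ ∀ P : Polynomial ℝ, P.natDegree ≤ N →
      ∑ n ∈ Finset.range (N + 1), |P.coeff n| ≤ C * L1K L a b w P := by
  obtain ⟨C, hC, h⟩ := norm_equiv (hab 0 hL) (hw 0 hL) (hpos 0 hL) N
  have h0 : 0 < (b 0 - a 0) / 2 := by linarith [hab 0 hL]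
  refine ⟨C / ((b 0 - a 0) / 2), by positivity, fun P hP => (h P hP).trans ?_⟩
  rw [div_mul_eq_mul_div, mul_div_assoc]
  refine mul_le_mul_of_nonneg_left ?_ hC
  rw [le_div_iff₀ h0, L1K_eq hab hw hpos, mul_comm]
  refine Finset.single_le_sum (f := fun ℓ =>
      (b ℓ - a ℓ) / 2 * ∫ θ in (0:ℝ)..Real.pi, |gf (a ℓ) (b ℓ) w P θ|) ?_ (Finset.mem_range.2 hL)
  intro ℓ hℓ
  refine mul_nonneg (by linarith [hab ℓ (Finset.mem_range.1 hℓ)]) ?_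
  exact intervalIntegral.integral_nonneg Real.pi_pos.le fun _ _ => abs_nonneg _

/-- The minima `m_d` of `⫽·⫽_d` over monic polynomials of degree `N` are nondecreasing in
`d ≥ N`, bounded above by the minimum `m_∞` of `‖·/w‖_{L1(K)}` over monic polynomials of
degree `N`, and converge to `m_∞` as `d → ∞`. -/
theorem ersatz_minima_converge
    (L : ℕ) (hL : 0 < L) (a b : ℕ → ℝ)
    (ha0 : a 0 = -1) (hbL : b (L - 1) = 1)
    (hab : ∀ ℓ < L, a ℓ < b ℓ)
    (hgap : ∀ ℓ, ℓ + 1 < L → b ℓ < a (ℓ + 1))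
    (w : ℝ → ℝ)
    (hw : ContinuousOn w (⋃ ℓ ∈ Finset.range L, Set.Icc (a ℓ) (b ℓ)))
    (hwpos : ∀ x ∈ ⋃ ℓ ∈ Finset.range L, Set.Icc (a ℓ) (b ℓ), 0 < w x)
    (N : ℕ) (hN : 1 ≤ N)
    (m : ℕ → ℝ)
    (hm : ∀ d, m d = sInf { s : ℝ | ∃ P : Polynomial ℝ, P.Monic ∧ P.natDegree = N ∧
        s = ersatz L N d a b w P })
    (minf : ℝ)
    (hminf : minf = sInf { s : ℝ | ∃ P : Polynomial ℝ, P.Monic ∧ P.natDegree = N ∧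
        s = L1K L a b w P }) :
    (∀ d, N ≤ d → m d ≤ m (d + 1)) ∧
    (∀ d, N ≤ d → m d ≤ minf) ∧
    Tendsto m atTop (nhds minf) := by
  have hsub : ∀ ℓ < L, Set.Icc (a ℓ) (b ℓ) ⊆ ⋃ ℓ ∈ Finset.range L, Set.Icc (a ℓ) (b ℓ) := by
    intro ℓ hℓ x hx
    simp only [Set.mem_iUnion]
    exact ⟨ℓ, Finset.mem_range.2 hℓ, hx⟩
  have hw' : ∀ ℓ < L, ContinuousOn w (Set.Icc (a ℓ) (b ℓ)) := fun ℓ hℓ => hw.mono (hsub ℓ hℓ)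
  have hp' : ∀ ℓ < L, ∀ x ∈ Set.Icc (a ℓ) (b ℓ), 0 < w x :=
    fun ℓ hℓ x hx => hwpos x (hsub ℓ hℓ hx)
  have hbdd : ∀ d P, BddBelow (erSet L N d a b w P) := fun d P => ⟨0, fun s hs => erSet_nonneg hab hs⟩
  have hne : ∀ d (P : Polynomial ℝ), P.natDegree = N → (erSet L N d a b w P).Nonempty :=
    fun d P hP => ⟨_, L1K_mem hab hw' hp' N d P hP.le⟩
  have her0 : ∀ d P, 0 ≤ ersatz L N d a b w P := fun d P =>
    Real.sInf_nonneg fun s hs => erSet_nonneg hab hs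
  have hmle : ∀ d (P : Polynomial ℝ), P.Monic → P.natDegree = N → m d ≤ ersatz L N d a b w P := by
    intro d P h1 h2
    rw [hm]
    refine csInf_le ⟨0, ?_⟩ ⟨P, h1, h2, rfl⟩
    rintro s ⟨P, _, _, rfl⟩
    exact her0 d P
  have hX : (Polynomial.X ^ N : Polynomial ℝ).Monic ∧ (Polynomial.X ^ N : Polynomial ℝ).natDegree = N :=
    ⟨Polynomial.monic_X_pow N, Polynomial.natDegree_X_pow N⟩
  have hL10 : ∀ (P : Polynomial ℝ), P.natDegree = N → 0 ≤ L1K L a b w P := fun P hP =>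
    erSet_nonneg hab (L1K_mem hab hw' hp' N 0 P hP.le)
  have hinfle : ∀ (P : Polynomial ℝ), P.Monic → P.natDegree = N → minf ≤ L1K L a b w P := by
    intro P h1 h2
    rw [hminf]
    refine csInf_le ⟨0, ?_⟩ ⟨P, h1, h2, rfl⟩
    rintro s ⟨P, _, h, rfl⟩
    exact hL10 P h
  have hup : ∀ d, m d ≤ minf := by
    intro d
    rw [hminf]
    refine le_csInf ⟨_, _, hX.1, hX.2, rfl⟩ ?_
    rintro s ⟨P, h1, h2, rfl⟩
    exact (hmle d P h1 h2).trans (csInf_le (hbdd d P) (L1K_mem hab hw' hp' N d P h2.le))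
  refine ⟨fun d _ => ?_, fun d _ => hup d, ?_⟩
  · rw [hm (d + 1)]
    refine le_csInf ⟨_, _, hX.1, hX.2, rfl⟩ ?_
    rintro s ⟨P, h1, h2, rfl⟩
    refine (hmle d P h1 h2).trans ?_
    rw [ersatz_eq, ersatz_eq]
    exact le_csInf (hne (d + 1) P h2) fun s hs => csInf_le (hbdd d P) (erSet_succ hs)
  · obtain ⟨C, hC, hCP⟩ := norm_equiv_K hL hab hw' hp' N
    have hδ := delta_tendsto hab hw' hp' N
    have hCδ : Tendsto (fun d => 1 - C * delta L N a b w d) atTop (nhds 1) := by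
      simpa using (hδ.const_mul C).const_sub 1
    have hlow : Tendsto (fun d => (1 - C * delta L N a b w d) * minf) atTop (nhds minf) := by
      simpa using hCδ.mul_const minf
    refine tendsto_of_tendsto_of_tendsto_of_le_of_le' hlow tendsto_const_nhds ?_
      (Eventually.of_forall hup)
    filter_upwards [hCδ.eventually (lt_mem_nhds (zero_lt_one))] with d hd
    rw [hm d]
    refine le_csInf ⟨_, _, hX.1, hX.2, rfl⟩ ?_
    rintro s ⟨P, h1, h2, rfl⟩
    rw [ersatz_eq]
    refine le_csInf (hne d P h2) fun s hs => ?_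
    have e1 := erSet_lower hab hw' hp' N d P h2.le hs
    have e2 := mul_le_mul_of_nonneg_left (hCP P h2.le) (delta_nonneg (w := w) hab N d)
    have e3 := mul_le_mul_of_nonneg_left (hinfle P h1 h2) hd.le
    nlinarith
end

section
/- Let K = ⋃_{ℓ=1}^L [a_ℓ, b_ℓ] ⊆ [−1,1] with −1 = a_1 < b_1 < a_2 < ⋯ < a_L < b_L = 1, let w be continuous and strictly positive on K, and let N ≥ 1. Assume the minimizer U of ‖P/w‖_{L1(K)} among monic polynomials of degree N is unique, and for each d ≥ N let V_d be any monic polynomial of degree N minimizing sslash · sslash_d among monic polynomials of degree N. Then the relative error δ_d := 1 − sslash V_d sslash_d / ‖V_d/w‖_{L1(K)} satisfies δ_d ≥ 0 for all d ≥ N and δ_d → 0 as d → ∞. -/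
open MeasureTheory Filter Polynomial

namespace ErsatzAux

open Real intervalIntegral

lemma cos_natAbs (i j : ℕ) (θ : ℝ) :
    cos ((((i : ℤ) - (j : ℤ)).natAbs : ℕ) * θ) = cos (((i : ℝ) - j) * θ) := by
  have h : ((((i : ℤ) - (j : ℤ)).natAbs : ℕ) : ℝ) = |(i : ℝ) - j| := by
    rw [Nat.cast_natAbs]; push_cast; rfl
  rw [h]
  rcases abs_choice ((i : ℝ) - j) with h | h <;> rw [h]
  rw [neg_mul, cos_neg]

/-- The (unnormalised) Fejer-type sum of a vector. -/
noncomputable def F (d : ℕ) (y : Fin (d + 1) → ℝ) (θ : ℝ) : ℝ :=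
  ∑ i : Fin (d + 1), ∑ j : Fin (d + 1),
    toepFin d y i j * cos ((((i : ℕ) : ℝ) - ((j : ℕ) : ℝ)) * θ)

/-- Cosine moments. -/
noncomputable def mom (d : ℕ) (g : ℝ → ℝ) (k : Fin (d + 1)) : ℝ :=
  ∫ θ in (0:ℝ)..π, cos (((k : ℕ) : ℝ) * θ) * g θ

lemma F_cont (d : ℕ) (y : Fin (d + 1) → ℝ) : Continuous (F d y) := by
  unfold F; fun_prop

lemma F_sub (d : ℕ) (y z : Fin (d + 1) → ℝ) (θ : ℝ) :
    F d (fun k => y k - z k) θ = F d y θ - F d z θ := by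
  simp only [F, toepFin, ← Finset.sum_sub_distrib, sub_mul]

lemma F_add (d : ℕ) (y z : Fin (d + 1) → ℝ) (θ : ℝ) :
    F d (fun k => y k + z k) θ = F d y θ + F d z θ := by
  simp only [F, toepFin, ← Finset.sum_add_distrib, add_mul]

lemma F_smul (d : ℕ) (c : ℝ) (y : Fin (d + 1) → ℝ) (θ : ℝ) :
    F d (fun k => c * y k) θ = c * F d y θ := by
  simp only [F, toepFin, Finset.mul_sum, mul_assoc]

lemma quad_eq (d : ℕ) (y x : Fin (d + 1) → ℝ) :
    star x ⬝ᵥ (Matrix.mulVec (toepFin d y) x) =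
      ∑ i, ∑ j, toepFin d y i j * (x i * x j) := by
  simp only [dotProduct, Matrix.mulVec, Pi.star_apply, star_trivial, Finset.mul_sum]
  refine Finset.sum_congr rfl fun i _ => Finset.sum_congr rfl fun j _ => by ring

lemma F_nonneg (d : ℕ) (y : Fin (d + 1) → ℝ) (h : (toepFin d y).PosSemidef) (θ : ℝ) :
    0 ≤ F d y θ := by
  have h1 := h.dotProduct_mulVec_nonneg (fun i => cos (((i : ℕ) : ℝ) * θ))
  have h2 := h.dotProduct_mulVec_nonneg (fun i => sin (((i : ℕ) : ℝ) * θ))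
  rw [quad_eq] at h1 h2
  have : F d y θ = (∑ i : Fin (d + 1), ∑ j : Fin (d + 1),
      toepFin d y i j * (cos (((i : ℕ) : ℝ) * θ) * cos (((j : ℕ) : ℝ) * θ))) +
      ∑ i : Fin (d + 1), ∑ j : Fin (d + 1),
      toepFin d y i j * (sin (((i : ℕ) : ℝ) * θ) * sin (((j : ℕ) : ℝ) * θ)) := by
    simp only [F, ← Finset.sum_add_distrib]
    refine Finset.sum_congr rfl fun i _ => Finset.sum_congr rfl fun j _ => ?_
    rw [sub_mul, cos_sub]; ring
  linarith

lemma integral_cos_int (m : ℤ) (hm : m ≠ 0) :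
    ∫ θ in (0:ℝ)..π, cos ((m : ℝ) * θ) = 0 := by
  have hm' : (m : ℝ) ≠ 0 := by exact_mod_cast hm
  rw [intervalIntegral.integral_comp_mul_left (fun x => cos x) hm']
  simp [integral_cos, sin_int_mul_pi]

lemma integral_F (d : ℕ) (y : Fin (d + 1) → ℝ) :
    ∫ θ in (0:ℝ)..π, F d y θ = (d + 1) * π * y 0 := by
  unfold F
  rw [intervalIntegral.integral_finsetSum
    (fun i _ => Continuous.intervalIntegrable (by fun_prop) _ _)]
  have : ∀ i : Fin (d + 1), ∫ θ in (0:ℝ)..π, (∑ j : Fin (d + 1),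
      toepFin d y i j * cos ((((i : ℕ) : ℝ) - ((j : ℕ) : ℝ)) * θ)) = π * y 0 := by
    intro i
    rw [intervalIntegral.integral_finsetSum
      (fun i _ => Continuous.intervalIntegrable (by fun_prop) _ _)]
    rw [Finset.sum_eq_single i]
    · simp [toepFin, mul_comm]
    · intro j _ hj
      rw [intervalIntegral.integral_const_mul]
      have := integral_cos_int (((i : ℕ) : ℤ) - ((j : ℕ) : ℤ)) (by
        intro h; apply hj; ext; omega)
      push_cast at this
      rw [this, mul_zero]
    · simp
  rw [Finset.sum_congr rfl (fun i _ => this i)]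
  simp; ring

lemma lower (d : ℕ) (yp ym : Fin (d + 1) → ℝ) (hp : (toepFin d yp).PosSemidef)
    (hm : (toepFin d ym).PosSemidef) :
    ∫ θ in (0:ℝ)..π, |((d + 1) * π)⁻¹ * F d (fun k => yp k - ym k) θ| ≤ yp 0 + ym 0 := by
  have hc : 0 < ((d : ℝ) + 1) * π := by positivity
  have h1 : ∫ θ in (0:ℝ)..π, |((d + 1) * π)⁻¹ * F d (fun k => yp k - ym k) θ| ≤
      ∫ θ in (0:ℝ)..π, ((d + 1) * π)⁻¹ * (F d yp θ + F d ym θ) := by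
    apply intervalIntegral.integral_mono_on pi_pos.le
    · exact Continuous.intervalIntegrable (by have := F_cont d; fun_prop) _ _
    · exact Continuous.intervalIntegrable (by have := F_cont d; fun_prop) _ _
    · intro θ _
      rw [F_sub, abs_mul, abs_of_pos (inv_pos.mpr hc)]
      gcongr
      have := F_nonneg d yp hp θ
      have := F_nonneg d ym hm θ
      rw [abs_le]; constructor <;> linarith
  rw [intervalIntegral.integral_const_mul, intervalIntegral.integral_add
    ((F_cont d _).intervalIntegrable _ _) ((F_cont d _).intervalIntegrable _ _),
    integral_F, integral_F] at h1
  refine h1.trans_eq ?_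
  field_simp

lemma mom_psd (d : ℕ) (g : ℝ → ℝ) (hg : Continuous g) (h0 : ∀ θ ∈ Set.Icc 0 π, 0 ≤ g θ) :
    (toepFin d (mom d g)).PosSemidef := by
  apply Matrix.PosSemidef.of_dotProduct_mulVec_nonneg
  · ext i j
    simp only [Matrix.conjTranspose_apply, star_trivial, toepFin]
    congr 2; omega
  · intro x
    rw [quad_eq]
    have : ∑ i, ∑ j, toepFin d (mom d g) i j * (x i * x j) =
        ∫ θ in (0:ℝ)..π, ((∑ i : Fin (d + 1), x i * cos (((i : ℕ) : ℝ) * θ)) ^ 2 +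
          (∑ i : Fin (d + 1), x i * sin (((i : ℕ) : ℝ) * θ)) ^ 2) * g θ := by
      have e : ∀ θ : ℝ, ((∑ i : Fin (d + 1), x i * cos (((i : ℕ) : ℝ) * θ)) ^ 2 +
          (∑ i : Fin (d + 1), x i * sin (((i : ℕ) : ℝ) * θ)) ^ 2) * g θ =
          ∑ i : Fin (d + 1), ∑ j : Fin (d + 1),
            (cos ((((i : ℕ) : ℝ) - ((j : ℕ) : ℝ)) * θ) * g θ) * (x i * x j) := by
        intro θ
        rw [sq, sq, Finset.sum_mul_sum, Finset.sum_mul_sum]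
        simp only [← Finset.sum_add_distrib, Finset.sum_mul]
        refine Finset.sum_congr rfl fun i _ => Finset.sum_congr rfl fun j _ => ?_
        rw [sub_mul, cos_sub]; ring
      simp only [e]
      rw [intervalIntegral.integral_finsetSum
        (fun i _ => Continuous.intervalIntegrable (by fun_prop) _ _)]
      refine Finset.sum_congr rfl fun i _ => ?_
      rw [intervalIntegral.integral_finsetSum
        (fun i _ => Continuous.intervalIntegrable (by fun_prop) _ _)]
      refine Finset.sum_congr rfl fun j _ => ?_
      rw [intervalIntegral.integral_mul_const]
      simp only [toepFin, mom, cos_natAbs]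
    rw [this]
    apply intervalIntegral.integral_nonneg pi_pos.le
    intro θ hθ
    have := h0 θ hθ
    positivity

/-- Fejer operator. -/
noncomputable def T (d : ℕ) (g : ℝ → ℝ) (θ : ℝ) : ℝ := ((d + 1) * π)⁻¹ * F d (mom d g) θ

lemma T_cont (d : ℕ) (g : ℝ → ℝ) : Continuous (T d g) := by
  have := F_cont d; unfold T; fun_prop

lemma mom_add (d : ℕ) (g h : ℝ → ℝ) (hg : Continuous g) (hh : Continuous h) :
    mom d (fun θ => g θ + h θ) = fun k => mom d g k + mom d h k := by
  ext k
  simp only [mom, mul_add]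
  rw [intervalIntegral.integral_add] <;> exact Continuous.intervalIntegrable (by fun_prop) _ _

lemma mom_smul (d : ℕ) (c : ℝ) (g : ℝ → ℝ) :
    mom d (fun θ => c * g θ) = fun k => c * mom d g k := by
  ext k
  simp only [mom, mul_left_comm _ c]
  rw [intervalIntegral.integral_const_mul]

lemma T_add (d : ℕ) (g h : ℝ → ℝ) (hg : Continuous g) (hh : Continuous h) (θ : ℝ) :
    T d (fun θ => g θ + h θ) θ = T d g θ + T d h θ := by
  simp only [T]; rw [mom_add d g h hg hh, F_add]; ring

lemma T_smul (d : ℕ) (c : ℝ) (g : ℝ → ℝ) (θ : ℝ) :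
    T d (fun θ => c * g θ) θ = c * T d g θ := by
  simp only [T]; rw [mom_smul, F_smul]; ring

lemma mom_pm (d : ℕ) (g : ℝ → ℝ) (hg : Continuous g) (k : Fin (d + 1)) :
    mom d (fun θ => max (g θ) 0) k - mom d (fun θ => max (-g θ) 0) k = mom d g k := by
  simp only [mom]
  rw [← intervalIntegral.integral_sub]
  · congr 1; ext θ
    rcases le_total (g θ) 0 with h | h
    · rw [max_eq_right h, max_eq_left (by linarith)]; ring
    · rw [max_eq_left h, max_eq_right (by linarith)]; ring
  all_goals exact Continuous.intervalIntegrable (by fun_prop) _ _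

lemma mom_pm0 (d : ℕ) (g : ℝ → ℝ) (hg : Continuous g) :
    mom d (fun θ => max (g θ) 0) 0 + mom d (fun θ => max (-g θ) 0) 0 =
      ∫ θ in (0:ℝ)..π, |g θ| := by
  simp only [mom]
  rw [← intervalIntegral.integral_add]
  · congr 1; ext θ
    rcases le_total (g θ) 0 with h | h
    · rw [max_eq_right h, max_eq_left (by linarith), abs_of_nonpos h]; simp
    · rw [max_eq_left h, max_eq_right (by linarith), abs_of_nonneg h]; simp
  all_goals exact Continuous.intervalIntegrable (by fun_prop) _ _

lemma pm_psd (d : ℕ) (g : ℝ → ℝ) (hg : Continuous g) :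
    (toepFin d (mom d (fun θ => max (g θ) 0))).PosSemidef ∧
    (toepFin d (mom d (fun θ => max (-g θ) 0))).PosSemidef :=
  ⟨mom_psd d _ (by fun_prop) fun _ _ => le_max_right _ _,
   mom_psd d _ (by fun_prop) fun _ _ => le_max_right _ _⟩

lemma T_contr (d : ℕ) (g : ℝ → ℝ) (hg : Continuous g) :
    ∫ θ in (0:ℝ)..π, |T d g θ| ≤ ∫ θ in (0:ℝ)..π, |g θ| := by
  have := lower d _ _ (pm_psd d g hg).1 (pm_psd d g hg).2
  simp only [mom_pm d g hg] at this
  rw [mom_pm0 d g hg] at this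
  exact this

/-- Good functions: the Fejer operator converges in mean. -/
def Good (g : ℝ → ℝ) : Prop :=
  Continuous g ∧ Tendsto (fun d : ℕ => ∫ θ in (0:ℝ)..π, |T d g θ - g θ|) atTop (nhds 0)

lemma Good.add {g h : ℝ → ℝ} (hg : Good g) (hh : Good h) : Good (fun θ => g θ + h θ) := by
  obtain ⟨hg, hg'⟩ := hg
  obtain ⟨hh, hh'⟩ := hh
  refine ⟨by fun_prop, ?_⟩
  have h0 := hg'.add hh'
  rw [add_zero] at h0
  refine squeeze_zero (fun d => intervalIntegral.integral_nonneg pi_pos.le fun _ _ => abs_nonneg _)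
    (fun d => ?_) h0
  have := T_cont d
  rw [← intervalIntegral.integral_add]
  · apply intervalIntegral.integral_mono_on pi_pos.le
    · exact Continuous.intervalIntegrable (by fun_prop) _ _
    · exact Continuous.intervalIntegrable (by fun_prop) _ _
    · intro θ _
      rw [T_add d g h hg hh]
      refine le_trans (le_of_eq ?_) (abs_add_le _ _)
      congr 1; ring
  all_goals exact Continuous.intervalIntegrable (by fun_prop) _ _

lemma Good.smul {g : ℝ → ℝ} (c : ℝ) (hg : Good g) : Good (fun θ => c * g θ) := by
  obtain ⟨hg, hg'⟩ := hg
  refine ⟨by fun_prop, ?_⟩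
  have h0 := hg'.const_mul |c|
  rw [mul_zero] at h0
  refine h0.congr fun d => ?_
  rw [← intervalIntegral.integral_const_mul]
  congr 1; ext θ
  rw [T_smul, ← mul_sub, abs_mul]

lemma toep_sum (f : ℕ → ℝ) (n : ℕ) :
    ∑ i ∈ Finset.range n, ∑ j ∈ Finset.range n, f (((i : ℤ) - (j : ℤ)).natAbs) =
      ∑ m ∈ Finset.range n, (f 0 + 2 * ∑ k ∈ Finset.range m, f (k + 1)) := by
  have hl : ∀ n : ℕ, ∑ j ∈ Finset.range n, f (((n : ℤ) - (j : ℤ)).natAbs) =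
      ∑ k ∈ Finset.range n, f (k + 1) := by
    intro n
    rw [← Finset.sum_range_reflect]
    refine Finset.sum_congr rfl fun k hk => ?_
    have := Finset.mem_range.mp hk
    congr 1; omega
  have hr : ∀ n : ℕ, ∑ j ∈ Finset.range n, f (((j : ℤ) - (n : ℤ)).natAbs) =
      ∑ k ∈ Finset.range n, f (k + 1) := by
    intro n
    rw [← hl n]
    refine Finset.sum_congr rfl fun k hk => ?_
    congr 1; omega
  induction n with
  | zero => simp
  | succ n ih =>
    rw [Finset.sum_range_succ, Finset.sum_range_succ (n := n)
      (f := fun m => (f 0 + 2 * ∑ k ∈ Finset.range m, f (k + 1))), ← ih]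
    simp only [Finset.sum_range_succ _ n]
    rw [Finset.sum_add_distrib, hl, hr]
    simp; ring

lemma integral_cos_cos (k j : ℕ) :
    ∫ θ in (0:ℝ)..π, cos ((k : ℝ) * θ) * cos ((j : ℝ) * θ) =
      if k = j then (if j = 0 then π else π / 2) else 0 := by
  have e : ∀ θ : ℝ, cos ((k : ℝ) * θ) * cos ((j : ℝ) * θ) =
      (1 / 2) * cos ((((k : ℤ) - (j : ℤ) : ℤ) : ℝ) * θ) +
      (1 / 2) * cos ((((k : ℤ) + (j : ℤ) : ℤ) : ℝ) * θ) := by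
    intro θ
    push_cast
    rw [sub_mul, add_mul, cos_sub, cos_add]; ring
  simp only [e]
  rw [intervalIntegral.integral_add (Continuous.intervalIntegrable (by fun_prop) _ _)
    (Continuous.intervalIntegrable (by fun_prop) _ _),
    intervalIntegral.integral_const_mul, intervalIntegral.integral_const_mul]
  by_cases hkj : k = j
  · subst hkj
    by_cases h0 : k = 0
    · subst h0; simp; ring
    · rw [integral_cos_int ((k : ℤ) + k) (by omega)]
      simp [h0]; ring
  · rw [integral_cos_int _ (by omega), integral_cos_int _ (by omega)]
    simp [hkj]

lemma good_cos (j : ℕ) : Good (fun θ => cos ((j : ℝ) * θ)) := by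
  refine ⟨by fun_prop, ?_⟩
  set c : ℝ := if j = 0 then π else π / 2 with hc
  set u : ℕ → ℝ := fun m => (if 0 = j then 1 else 0) +
    2 * ∑ k ∈ Finset.range m, (if k + 1 = j then (1 : ℝ) else 0) with hu
  have hT : ∀ d θ, T d (fun θ => cos ((j : ℝ) * θ)) θ =
      (c / π * (((d + 1 : ℕ) : ℝ)⁻¹ * ∑ m ∈ Finset.range (d + 1), u m)) * cos ((j : ℝ) * θ) := by
    intro d θ
    have h1 := toep_sum (fun k => if k = j then (1 : ℝ) else 0) (d + 1)
    simp only [hu]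
    rw [← h1]
    simp only [T, F]
    have : ∀ i k : Fin (d + 1), toepFin d (mom d fun θ => cos ((j : ℝ) * θ)) i k *
        cos ((((i : ℕ) : ℝ) - ((k : ℕ) : ℝ)) * θ) =
        (c * cos ((j : ℝ) * θ)) *
          (if (((i : ℕ) : ℤ) - ((k : ℕ) : ℤ)).natAbs = j then (1 : ℝ) else 0) := by
      intro i k
      rw [← cos_natAbs]
      simp only [toepFin, mom, integral_cos_cos, ← hc]
      by_cases h : (((i : ℕ) : ℤ) - ((k : ℕ) : ℤ)).natAbs = j
      · simp [h]
      · simp [h]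
    simp only [this, ← Finset.mul_sum]
    rw [Finset.sum_range]
    simp only [Finset.sum_range]
    push_cast
    field_simp
  have hlim : Tendsto u atTop (nhds (π / c)) := by
    refine tendsto_const_nhds.congr' ?_
    filter_upwards [eventually_ge_atTop j] with m hm
    by_cases h0 : j = 0
    · subst h0; simp [hc, hu]
    · obtain ⟨i, rfl⟩ := Nat.exists_eq_succ_of_ne_zero h0
      have : i < m := by omega
      simp [hc, hu, this]
  have hl2 := (((hlim.cesaro).comp (tendsto_add_atTop_nat 1)).const_mul (c / π)).sub_const 1
  have hc0 : c ≠ 0 := by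
    have := pi_pos
    rw [hc]; split_ifs <;> positivity
  have h1 : c / π * (π / c) - 1 = 0 := by field_simp; simp
  rw [h1] at hl2
  have hl3 := (hl2.abs).mul_const (∫ θ in (0:ℝ)..π, |cos ((j : ℝ) * θ)|)
  simp only [abs_zero, zero_mul] at hl3
  refine hl3.congr fun d => ?_
  rw [← intervalIntegral.integral_const_mul]
  congr 1; ext θ
  rw [hT, ← abs_mul]
  simp only [Function.comp]
  congr 1; ring

lemma good_pow_cos (n : ℕ) : ∀ j : ℕ, Good (fun θ => cos θ ^ n * cos ((j : ℝ) * θ)) := by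
  induction n with
  | zero => intro j; simpa using good_cos j
  | succ n ih =>
    intro j
    cases j with
    | zero =>
      convert ih 1 using 2
      simp; ring
    | succ j =>
      convert ((ih (j + 2)).add (ih j)).smul (1 / 2) using 2 with θ
      push_cast
      have e1 : ((j : ℝ) + 2) * θ = ((j : ℝ) + 1) * θ + θ := by ring
      have e2 : (j : ℝ) * θ = ((j : ℝ) + 1) * θ - θ := by ring
      rw [e1, e2, cos_add, cos_sub]; ring

lemma good_poly (p : Polynomial ℝ) : Good (fun θ => p.eval (cos θ)) := by
  induction p using Polynomial.induction_on' with
  | add p q hp hq => simpa using hp.add hq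
  | monomial n a => simpa using (good_pow_cos n 0).smul a

lemma good_cont (g : ℝ → ℝ) (hg : Continuous g) : Good g := by
  refine ⟨hg, ?_⟩
  rw [Metric.tendsto_atTop]
  intro ε hε
  have hη : 0 < ε / (4 * π) := by positivity
  obtain ⟨p, hp⟩ := exists_polynomial_near_of_continuousOn (-1) 1 (fun x => g (arccos x))
    (hg.comp continuous_arccos).continuousOn _ hη
  obtain ⟨hpc, hpt⟩ := good_poly p
  set h : ℝ → ℝ := fun θ => p.eval (cos θ) with hh
  have hclose : ∀ θ ∈ Set.Icc (0:ℝ) π, |g θ + (-1) * h θ| ≤ ε / (4 * π) := by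
    intro θ hθ
    have := hp (cos θ) ⟨neg_one_le_cos θ, cos_le_one θ⟩
    rw [arccos_cos hθ.1 hθ.2, abs_sub_comm] at this
    simp only [hh]
    rw [neg_one_mul, ← sub_eq_add_neg]
    exact this.le
  have hintg : ∫ θ in (0:ℝ)..π, |g θ + (-1) * h θ| ≤ ε / 4 := by
    have : ∫ θ in (0:ℝ)..π, |g θ + (-1) * h θ| ≤ ∫ θ in (0:ℝ)..π, ε / (4 * π) :=
      intervalIntegral.integral_mono_on pi_pos.le
        (Continuous.intervalIntegrable (by fun_prop) _ _)
        (Continuous.intervalIntegrable (by fun_prop) _ _) hclose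
    refine this.trans_eq ?_
    rw [intervalIntegral.integral_const, smul_eq_mul]
    field_simp; ring
  rw [Metric.tendsto_atTop] at hpt
  obtain ⟨D, hD⟩ := hpt (ε / 2) (by positivity)
  refine ⟨D, fun d hd => ?_⟩
  have h1 := hD d hd
  rw [Real.dist_eq, sub_zero, abs_of_nonneg
    (intervalIntegral.integral_nonneg pi_pos.le fun _ _ => abs_nonneg _)] at h1 ⊢
  have h2 := T_contr d (fun θ => g θ + (-1) * h θ) (by fun_prop)
  have hTc := T_cont d
  have h3 : ∫ θ in (0:ℝ)..π, |T d g θ - g θ| ≤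
      ∫ θ in (0:ℝ)..π, (|T d (fun θ => g θ + (-1) * h θ) θ| + |T d h θ - h θ|
        + |g θ + (-1) * h θ|) := by
    apply intervalIntegral.integral_mono_on pi_pos.le
    · exact Continuous.intervalIntegrable (by fun_prop) _ _
    · exact Continuous.intervalIntegrable (by fun_prop) _ _
    · intro θ _
      have e : T d (fun θ => g θ + (-1) * h θ) θ = T d g θ + (-1) * T d h θ := by
        rw [T_add d g _ hg (by fun_prop), T_smul]
      rw [e, ← abs_neg (g θ + (-1) * h θ)]
      refine le_trans (le_of_eq ?_) (abs_add_three _ _ _)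
      congr 1; ring
  rw [intervalIntegral.integral_add, intervalIntegral.integral_add] at h3
  · linarith
  all_goals exact Continuous.intervalIntegrable (by fun_prop) _ _

end ErsatzAux

namespace ErsatzAux

open Real intervalIntegral

/-- The change of variables. -/
noncomputable def tau (a b θ : ℝ) : ℝ := ((b - a) * cos θ + a + b) / 2

/-- The basis functions. -/
noncomputable def gf (a b : ℝ) (w : ℝ → ℝ) (n : ℕ) (θ : ℝ) : ℝ :=
  sin (((n : ℝ) + 1) * θ) / w (tau a b θ)

lemma tau_mem {a b : ℝ} (hab : a < b) (θ : ℝ) : tau a b θ ∈ Set.Icc a b := by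
  have h1 := neg_one_le_cos θ
  have h2 := cos_le_one θ
  unfold tau
  constructor <;> nlinarith

lemma w_tau_cont {a b : ℝ} (hab : a < b) {w : ℝ → ℝ} (hw : ContinuousOn w (Set.Icc a b)) :
    Continuous (fun θ => w (tau a b θ)) := by
  have : Continuous (tau a b) := by unfold tau; fun_prop
  exact hw.comp_continuous this (tau_mem hab)

lemma gf_cont {a b : ℝ} (hab : a < b) {w : ℝ → ℝ} (hw : ContinuousOn w (Set.Icc a b))
    (hp : ∀ x ∈ Set.Icc a b, 0 < w x) (n : ℕ) : Continuous (gf a b w n) := by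
  unfold gf
  exact Continuous.div (by fun_prop) (w_tau_cont hab hw) fun θ => (hp _ (tau_mem hab θ)).ne'

/-- The density associated with coefficients `q`. -/
noncomputable def G (a b : ℝ) (w : ℝ → ℝ) {N : ℕ} (q : Fin (N + 1) → ℝ) (θ : ℝ) : ℝ :=
  ∑ n : Fin (N + 1), q n * gf a b w (n : ℕ) θ

lemma G_cont {a b : ℝ} (hab : a < b) {w : ℝ → ℝ} (hw : ContinuousOn w (Set.Icc a b))
    (hp : ∀ x ∈ Set.Icc a b, 0 < w x) {N : ℕ} (q : Fin (N + 1) → ℝ) :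
    Continuous (G a b w q) := by
  have := gf_cont hab hw hp
  unfold G; fun_prop

lemma G_eq (a b : ℝ) (w : ℝ → ℝ) {N : ℕ} (q : Fin (N + 1) → ℝ) (P : Polynomial ℝ)
    (hq : transplant a b P
      = ∑ n : Fin (N + 1), Polynomial.C (q n) * Polynomial.Chebyshev.U ℝ ((n : ℕ) : ℤ)) (θ : ℝ) :
    G a b w q θ = P.eval (tau a b θ) * sin θ / w (tau a b θ) := by
  have h := congrArg (Polynomial.eval (cos θ)) hq
  have e : (b - a) / 2 * cos θ + (a + b) / 2 = tau a b θ := by unfold tau; ring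
  simp only [transplant, Polynomial.eval_comp, Polynomial.eval_add, Polynomial.eval_mul,
    Polynomial.eval_C, Polynomial.eval_X, Polynomial.eval_finsetSum, e] at h
  rw [h, Finset.sum_mul, Finset.sum_div]
  unfold G gf
  refine Finset.sum_congr rfl fun n _ => ?_
  have := Polynomial.Chebyshev.U_real_cos θ ((n : ℕ) : ℤ)
  push_cast at this
  rw [mul_assoc, this]; ring

lemma L1_subst {a b : ℝ} (hab : a < b) {w : ℝ → ℝ} (hw : ContinuousOn w (Set.Icc a b))
    (hp : ∀ x ∈ Set.Icc a b, 0 < w x) {N : ℕ} (q : Fin (N + 1) → ℝ) (P : Polynomial ℝ)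
    (hq : transplant a b P
      = ∑ n : Fin (N + 1), Polynomial.C (q n) * Polynomial.Chebyshev.U ℝ ((n : ℕ) : ℤ)) :
    ∫ t in a..b, |P.eval t| / w t = (b - a) / 2 * ∫ θ in (0:ℝ)..π, |G a b w q θ| := by
  have hd : ∀ x, HasDerivAt (tau a b) (-((b - a) / 2 * sin x)) x := by
    intro x
    have h := (((hasDerivAt_cos x).const_mul (b - a)).add_const a).add_const b |>.div_const 2
    exact h.congr_deriv (by ring)
  have h := intervalIntegral.integral_comp_mul_deriv'' (a := 0) (b := π) (f := tau a b)
    (f' := fun x => -((b - a) / 2 * sin x)) (g := fun t => |P.eval t| / w t)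
    (by unfold tau; fun_prop) (fun x _ => (hd x).hasDerivWithinAt) (by fun_prop) (by
      have hsub : tau a b '' Set.uIcc 0 π ⊆ Set.Icc a b := by
        rintro _ ⟨θ, _, rfl⟩; exact tau_mem hab θ
      refine ContinuousOn.mono ?_ hsub
      exact ContinuousOn.div (by fun_prop) hw fun x hx => (hp x hx).ne')
  have e0 : tau a b 0 = b := by simp [tau]
  have e1 : tau a b π = a := by simp [tau]; ring
  rw [e0, e1, intervalIntegral.integral_symm a b] at h
  have h' := neg_eq_iff_eq_neg.mp h.symm
  rw [h', ← intervalIntegral.integral_neg,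
    ← intervalIntegral.integral_const_mul]
  apply intervalIntegral.integral_congr
  intro θ hθ
  rw [Set.uIcc_of_le pi_pos.le] at hθ
  have hs := sin_nonneg_of_mem_Icc hθ
  have hw0 := hp _ (tau_mem hab θ)
  simp only [Function.comp]
  rw [G_eq a b w q P hq, abs_div, abs_mul, abs_of_nonneg hs, abs_of_pos hw0]
  ring

lemma momG {a b : ℝ} (hab : a < b) {w : ℝ → ℝ} (hw : ContinuousOn w (Set.Icc a b))
    (hp : ∀ x ∈ Set.Icc a b, 0 < w x) {N : ℕ} (q : Fin (N + 1) → ℝ) (d : ℕ) (k : Fin (d + 1)) :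
    ∑ n : Fin (N + 1), Jent a b w (k : ℕ) (n : ℕ) * q n = mom d (G a b w q) k := by
  have hg := gf_cont hab hw hp
  unfold mom G
  simp only [Finset.mul_sum]
  rw [intervalIntegral.integral_finsetSum
    (fun i _ => Continuous.intervalIntegrable (by fun_prop) _ _)]
  refine Finset.sum_congr rfl fun n _ => ?_
  unfold Jent
  rw [← intervalIntegral.integral_mul_const]
  congr 1; ext θ
  simp only [gf, tau]
  ring

lemma integral_sin_sin (k j : ℕ) :
    ∫ θ in (0:ℝ)..π, sin (((k : ℝ) + 1) * θ) * sin (((j : ℝ) + 1) * θ) =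
      if k = j then π / 2 else 0 := by
  have e : ∀ θ : ℝ, sin (((k : ℝ) + 1) * θ) * sin (((j : ℝ) + 1) * θ) =
      (1 / 2) * cos ((((k : ℤ) - (j : ℤ) : ℤ) : ℝ) * θ) -
      (1 / 2) * cos ((((k : ℤ) + (j : ℤ) + 2 : ℤ) : ℝ) * θ) := by
    intro θ
    push_cast
    have e1 : ((k : ℝ) - j) * θ = ((k : ℝ) + 1) * θ - ((j : ℝ) + 1) * θ := by ring
    have e2 : ((k : ℝ) + j + 2) * θ = ((k : ℝ) + 1) * θ + ((j : ℝ) + 1) * θ := by ring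
    rw [e1, e2, cos_sub, cos_add]; ring
  simp only [e]
  rw [intervalIntegral.integral_sub (Continuous.intervalIntegrable (by fun_prop) _ _)
    (Continuous.intervalIntegrable (by fun_prop) _ _),
    intervalIntegral.integral_const_mul, intervalIntegral.integral_const_mul,
    integral_cos_int ((k : ℤ) + j + 2) (by omega)]
  by_cases hkj : k = j
  · subst hkj
    simp; ring
  · rw [integral_cos_int _ (by omega)]
    simp [hkj]

lemma coef_bound {a b : ℝ} (hab : a < b) {w : ℝ → ℝ} (hw : ContinuousOn w (Set.Icc a b))
    (hp : ∀ x ∈ Set.Icc a b, 0 < w x) {M : ℝ} (hM : ∀ x ∈ Set.Icc a b, w x ≤ M)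
    {N : ℕ} (q : Fin (N + 1) → ℝ) (n : Fin (N + 1)) :
    |q n| ≤ 2 / π * M * ∫ θ in (0:ℝ)..π, |G a b w q θ| := by
  have hGc := G_cont hab hw hp q
  have hwc := w_tau_cont hab hw
  have key : ∫ θ in (0:ℝ)..π, G a b w q θ * w (tau a b θ) * sin ((((n : ℕ) : ℝ) + 1) * θ) =
      π / 2 * q n := by
    have e : ∀ θ, G a b w q θ * w (tau a b θ) * sin ((((n : ℕ) : ℝ) + 1) * θ) =
        ∑ m : Fin (N + 1), q m *
          (sin ((((m : ℕ) : ℝ) + 1) * θ) * sin ((((n : ℕ) : ℝ) + 1) * θ)) := by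
      intro θ
      have hw0 := (hp _ (tau_mem hab θ)).ne'
      simp only [G, gf, Finset.sum_mul]
      refine Finset.sum_congr rfl fun m _ => ?_
      field_simp
    simp only [e]
    rw [intervalIntegral.integral_finsetSum
      (fun i _ => Continuous.intervalIntegrable (by fun_prop) _ _)]
    simp only [intervalIntegral.integral_const_mul, integral_sin_sin]
    rw [Finset.sum_eq_single n]
    · simp; ring
    · intro m _ hm
      have : (m : ℕ) ≠ n := fun h => hm (Fin.ext h)
      simp [this]
    · simp
  have h1 : |π / 2 * q n| ≤ ∫ θ in (0:ℝ)..π, M * |G a b w q θ| := by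
    rw [← key]
    refine (intervalIntegral.abs_integral_le_integral_abs pi_pos.le).trans ?_
    apply intervalIntegral.integral_mono_on pi_pos.le
    · exact Continuous.intervalIntegrable ((hGc.mul hwc).mul (by fun_prop)).abs _ _
    · exact Continuous.intervalIntegrable (by fun_prop) _ _
    · intro θ _
      have hw0 := (hp _ (tau_mem hab θ))
      have hwM := (hM _ (tau_mem hab θ))
      rw [abs_mul, abs_mul, abs_of_pos hw0]
      calc |G a b w q θ| * w (tau a b θ) * |sin ((((n : ℕ) : ℝ) + 1) * θ)|
          ≤ |G a b w q θ| * M * 1 := by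
            gcongr
            · have := hw0.trans_le hwM; positivity
            · exact abs_sin_le_one _
        _ = _ := by ring
  rw [intervalIntegral.integral_const_mul, abs_mul, abs_of_pos (by positivity : (0:ℝ) < π / 2)] at h1
  calc |q n| = 2 / π * (π / 2 * |q n|) := by field_simp
    _ ≤ 2 / π * (M * ∫ θ in (0:ℝ)..π, |G a b w q θ|) := by gcongr
    _ = _ := by ring

lemma T_sum (d : ℕ) {ι : Type*} (s : Finset ι) (q : ι → ℝ) (g : ι → ℝ → ℝ)
    (hg : ∀ i, Continuous (g i)) (θ : ℝ) :
    T d (fun θ => ∑ i ∈ s, q i * g i θ) θ = ∑ i ∈ s, q i * T d (g i) θ := by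
  classical
  induction s using Finset.induction_on with
  | empty => simp [T, F, mom, toepFin]
  | insert i s hi ih =>
    simp only [Finset.sum_insert hi]
    rw [T_add d (fun θ => q i * g i θ) _ (by fun_prop) (by fun_prop), T_smul, ih]

/-- Error bound. -/
noncomputable def err (N : ℕ) (a b : ℝ) (w : ℝ → ℝ) (d : ℕ) : ℝ :=
  ∑ n : Fin (N + 1), ∫ θ in (0:ℝ)..π, |T d (gf a b w (n : ℕ)) θ - gf a b w (n : ℕ) θ|

lemma err_nonneg (N : ℕ) (a b : ℝ) (w : ℝ → ℝ) (d : ℕ) : 0 ≤ err N a b w d :=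
  Finset.sum_nonneg fun _ _ =>
    intervalIntegral.integral_nonneg pi_pos.le fun _ _ => abs_nonneg _

lemma err_tendsto (N : ℕ) {a b : ℝ} (hab : a < b) {w : ℝ → ℝ}
    (hw : ContinuousOn w (Set.Icc a b)) (hp : ∀ x ∈ Set.Icc a b, 0 < w x) :
    Tendsto (err N a b w) atTop (nhds 0) := by
  have : Tendsto (err N a b w) atTop (nhds (∑ _n : Fin (N + 1), 0)) :=
    tendsto_finsetSum _ fun n _ => (good_cont _ (gf_cont hab hw hp n)).2
  simpa using this

lemma seg_lower {a b : ℝ} (hab : a < b) {w : ℝ → ℝ} (hw : ContinuousOn w (Set.Icc a b))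
    (hp : ∀ x ∈ Set.Icc a b, 0 < w x) {M : ℝ} (hM : ∀ x ∈ Set.Icc a b, w x ≤ M)
    {N : ℕ} (q : Fin (N + 1) → ℝ) (d : ℕ) (yp ym : Fin (d + 1) → ℝ)
    (hy : ∀ k : Fin (d + 1), yp k - ym k
      = ∑ n : Fin (N + 1), Jent a b w (k : ℕ) (n : ℕ) * q n)
    (hyp : (toepFin d yp).PosSemidef) (hym : (toepFin d ym).PosSemidef) :
    (1 - 2 / π * M * err N a b w d) * ∫ θ in (0:ℝ)..π, |G a b w q θ| ≤ yp 0 + ym 0 := by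
  have hgc := gf_cont hab hw hp
  have hGc := G_cont hab hw hp q
  have hTc := T_cont d
  have h1 := lower d yp ym hyp hym
  simp only [hy, momG hab hw hp q d] at h1
  change ∫ θ in (0:ℝ)..π, |T d (G a b w q) θ| ≤ _ at h1
  have h2 : ∫ θ in (0:ℝ)..π, |G a b w q θ| ≤ ∫ θ in (0:ℝ)..π, (|T d (G a b w q) θ| +
      ∑ n : Fin (N + 1), |q n| * |T d (gf a b w (n : ℕ)) θ - gf a b w (n : ℕ) θ|) := by
    apply intervalIntegral.integral_mono_on pi_pos.le
    · exact Continuous.intervalIntegrable (by fun_prop) _ _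
    · exact Continuous.intervalIntegrable (by fun_prop) _ _
    · intro θ _
      have e : T d (G a b w q) θ - G a b w q θ = ∑ n : Fin (N + 1),
          q n * (T d (gf a b w (n : ℕ)) θ - gf a b w (n : ℕ) θ) := by
        have := T_sum d Finset.univ q (fun n : Fin (N + 1) => gf a b w (n : ℕ))
          (fun n => hgc n) θ
        change T d (G a b w q) θ = _ at this
        rw [this, G, ← Finset.sum_sub_distrib]
        exact Finset.sum_congr rfl fun n _ => by ring
      have h3 : |T d (G a b w q) θ - G a b w q θ| ≤
          ∑ n : Fin (N + 1), |q n| * |T d (gf a b w (n : ℕ)) θ - gf a b w (n : ℕ) θ| := by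
        rw [e]
        refine (Finset.abs_sum_le_sum_abs _ _).trans_eq ?_
        exact Finset.sum_congr rfl fun n _ => abs_mul _ _
      have h4 := abs_sub_abs_le_abs_sub (G a b w q θ) (T d (G a b w q) θ)
      rw [abs_sub_comm] at h4
      linarith
  rw [intervalIntegral.integral_add (Continuous.intervalIntegrable (by fun_prop) _ _)
    (Continuous.intervalIntegrable (by fun_prop) _ _), intervalIntegral.integral_finsetSum
      (fun i _ => Continuous.intervalIntegrable (by fun_prop) _ _)] at h2
  simp only [intervalIntegral.integral_const_mul] at h2
  have h5 : ∑ n : Fin (N + 1), |q n| *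
      ∫ θ in (0:ℝ)..π, |T d (gf a b w (n : ℕ)) θ - gf a b w (n : ℕ) θ| ≤
      (2 / π * M * ∫ θ in (0:ℝ)..π, |G a b w q θ|) * err N a b w d := by
    rw [err, Finset.mul_sum]
    refine Finset.sum_le_sum fun n _ => ?_
    exact mul_le_mul_of_nonneg_right (coef_bound hab hw hp hM q n)
      (intervalIntegral.integral_nonneg pi_pos.le fun _ _ => abs_nonneg _)
  linarith

lemma exists_coef (N : ℕ) : ∀ P : Polynomial ℝ, P.natDegree ≤ N → ∃ q : Fin (N + 1) → ℝ,
    P = ∑ n : Fin (N + 1), Polynomial.C (q n) * Polynomial.Chebyshev.U ℝ ((n : ℕ) : ℤ) := by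
  induction N with
  | zero =>
    intro P hP
    refine ⟨fun _ => P.coeff 0, ?_⟩
    simpa using Polynomial.eq_C_of_natDegree_le_zero hP
  | succ N ih =>
    intro P hP
    set u := Polynomial.Chebyshev.U ℝ ((N + 1 : ℕ) : ℤ) with hu
    have hud : u.natDegree = N + 1 := Polynomial.Chebyshev.natDegree_U_natCast ℝ (N + 1)
    have hu0 : u.coeff (N + 1) ≠ 0 := by
      have h : u.leadingCoeff ≠ 0 := by
        rw [hu, Polynomial.Chebyshev.leadingCoeff_U_natCast]; positivity
      rwa [Polynomial.leadingCoeff, hud] at h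
    set c := P.coeff (N + 1) / u.coeff (N + 1) with hc
    obtain ⟨q, hq⟩ := ih (P - Polynomial.C c * u) (by
      rw [Polynomial.natDegree_le_iff_coeff_eq_zero]
      intro m hm
      rw [Polynomial.coeff_sub, Polynomial.coeff_C_mul]
      rcases eq_or_lt_of_le (Nat.succ_le_of_lt hm) with h | h
      · rw [← h]; simp only [Nat.succ_eq_add_one, hc]; field_simp; ring
      · rw [Polynomial.coeff_eq_zero_of_natDegree_lt (by omega),
          Polynomial.coeff_eq_zero_of_natDegree_lt (by omega)]; simp)
    refine ⟨Fin.snoc q c, ?_⟩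
    rw [Fin.sum_univ_castSucc]
    simp only [Fin.snoc_castSucc, Fin.snoc_last, Fin.val_castSucc, Fin.val_last]
    rw [← hq]; ring

lemma transplant_deg (a b : ℝ) (hab : a < b) (P : Polynomial ℝ) :
    (transplant a b P).natDegree = P.natDegree := by
  rw [transplant, Polynomial.natDegree_comp,
    Polynomial.natDegree_linear (by linarith : (b - a) / 2 ≠ 0), mul_one]

end ErsatzAux

/-- If the `L1` minimizer `U` among monic polynomials of degree `N` is unique and `V d`
minimizes `⫽·⫽_d` among monic polynomials of degree `N` for each `d ≥ N`, then the
relative error `δ_d = 1 − ⫽V_d⫽_d / ‖V_d/w‖_{L1(K)}` is nonnegative for `d ≥ N` and tends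
to `0` as `d → ∞`. -/
theorem relative_error_tendsto_zero
    (L : ℕ) (hL : 0 < L) (a b : ℕ → ℝ)
    (ha0 : a 0 = -1) (hbL : b (L - 1) = 1)
    (hab : ∀ ℓ < L, a ℓ < b ℓ)
    (hgap : ∀ ℓ, ℓ + 1 < L → b ℓ < a (ℓ + 1))
    (w : ℝ → ℝ)
    (hw : ContinuousOn w (⋃ ℓ ∈ Finset.range L, Set.Icc (a ℓ) (b ℓ)))
    (hwpos : ∀ x ∈ ⋃ ℓ ∈ Finset.range L, Set.Icc (a ℓ) (b ℓ), 0 < w x)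
    (N : ℕ) (hN : 1 ≤ N)
    (U : Polynomial ℝ) (hUmonic : U.Monic) (hUdeg : U.natDegree = N)
    (hUmin : ∀ Q : Polynomial ℝ, Q.Monic → Q.natDegree = N →
      L1K L a b w U ≤ L1K L a b w Q)
    (hUuniq : ∀ Q : Polynomial ℝ, Q.Monic → Q.natDegree = N →
      (∀ R : Polynomial ℝ, R.Monic → R.natDegree = N →
        L1K L a b w Q ≤ L1K L a b w R) → Q = U)
    (V : ℕ → Polynomial ℝ)
    (hV : ∀ d, N ≤ d → (V d).Monic ∧ (V d).natDegree = N ∧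
      ∀ Q : Polynomial ℝ, Q.Monic → Q.natDegree = N →
        ersatz L N d a b w (V d) ≤ ersatz L N d a b w Q)
    (δ : ℕ → ℝ)
    (hδ : ∀ d, δ d = 1 - ersatz L N d a b w (V d) / L1K L a b w (V d)) :
    (∀ d, N ≤ d → 0 ≤ δ d) ∧ Tendsto δ atTop (nhds 0) := by
  have hsub : ∀ ℓ < L, Set.Icc (a ℓ) (b ℓ) ⊆ ⋃ ℓ ∈ Finset.range L, Set.Icc (a ℓ) (b ℓ) := by
    intro ℓ hℓ x hx
    exact Set.mem_biUnion (Finset.mem_coe.mpr (Finset.mem_range.mpr hℓ)) hx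
  have hwc : ∀ ℓ < L, ContinuousOn w (Set.Icc (a ℓ) (b ℓ)) := fun ℓ hℓ => hw.mono (hsub ℓ hℓ)
  have hwp : ∀ ℓ < L, ∀ x ∈ Set.Icc (a ℓ) (b ℓ), 0 < w x :=
    fun ℓ hℓ x hx => hwpos x (hsub ℓ hℓ hx)
  have hMex : ∀ ℓ, ∃ M : ℝ, 0 ≤ M ∧ (ℓ < L → ∀ x ∈ Set.Icc (a ℓ) (b ℓ), w x ≤ M) := by
    intro ℓ
    by_cases hℓ : ℓ < L
    · obtain ⟨M, hM⟩ := isCompact_Icc.exists_bound_of_continuousOn (hwc ℓ hℓ)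
      refine ⟨max M 0, le_max_right _ _, fun _ x hx => ?_⟩
      exact ((le_abs_self _).trans (hM x hx)).trans (le_max_left _ _)
    · exact ⟨0, le_rfl, fun h => absurd h hℓ⟩
  choose M hM0 hM using hMex
  set η : ℕ → ℝ := fun d => ∑ ℓ ∈ Finset.range L,
    2 / Real.pi * M ℓ * ErsatzAux.err N (a ℓ) (b ℓ) w d with hη
  have hη0 : Tendsto η atTop (nhds 0) := by
    have : Tendsto η atTop (nhds (∑ ℓ ∈ Finset.range L, 2 / Real.pi * M ℓ * 0)) :=
      tendsto_finsetSum _ fun ℓ hℓ => (ErsatzAux.err_tendsto N (hab ℓ (Finset.mem_range.mp hℓ))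
        (hwc ℓ (Finset.mem_range.mp hℓ)) (hwp ℓ (Finset.mem_range.mp hℓ))).const_mul _
    simpa using this
  have hηge : ∀ d, ∀ ℓ < L, 2 / Real.pi * M ℓ * ErsatzAux.err N (a ℓ) (b ℓ) w d ≤ η d := by
    intro d ℓ hℓ
    refine Finset.single_le_sum
      (f := fun ℓ => 2 / Real.pi * M ℓ * ErsatzAux.err N (a ℓ) (b ℓ) w d) (fun i _ => ?_)
      (Finset.mem_range.mpr hℓ)
    have h1 := hM0 i
    have h2 := ErsatzAux.err_nonneg N (a i) (b i) w d
    have h3 := Real.pi_pos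
    positivity
  have hL1 : ∀ (P : Polynomial ℝ) (q : ℕ → Fin (N + 1) → ℝ),
      (∀ ℓ < L, transplant (a ℓ) (b ℓ) P
          = ∑ n : Fin (N + 1), Polynomial.C (q ℓ n) * Polynomial.Chebyshev.U ℝ ((n : ℕ) : ℤ)) →
      L1K L a b w P = ∑ ℓ ∈ Finset.range L,
        (b ℓ - a ℓ) / 2 * ∫ θ in (0:ℝ)..Real.pi, |ErsatzAux.G (a ℓ) (b ℓ) w (q ℓ) θ| := by
    intro P q hq
    refine Finset.sum_congr rfl fun ℓ hℓ => ?_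
    have hℓ' := Finset.mem_range.mp hℓ
    exact ErsatzAux.L1_subst (hab ℓ hℓ') (hwc ℓ hℓ') (hwp ℓ hℓ') (q ℓ) P (hq ℓ hℓ')
  have hex : ∀ P : Polynomial ℝ, P.natDegree = N → ∃ q : ℕ → Fin (N + 1) → ℝ,
      ∀ ℓ < L, transplant (a ℓ) (b ℓ) P
          = ∑ n : Fin (N + 1), Polynomial.C (q ℓ n) *
            Polynomial.Chebyshev.U ℝ ((n : ℕ) : ℤ) := by
    intro P hP
    have : ∀ ℓ, ∃ q : Fin (N + 1) → ℝ, ℓ < L → transplant (a ℓ) (b ℓ) P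
          = ∑ n : Fin (N + 1), Polynomial.C (q n) *
            Polynomial.Chebyshev.U ℝ ((n : ℕ) : ℤ) := by
      intro ℓ
      by_cases hℓ : ℓ < L
      · obtain ⟨q, hq⟩ := ErsatzAux.exists_coef N (transplant (a ℓ) (b ℓ) P)
          (by rw [ErsatzAux.transplant_deg _ _ (hab ℓ hℓ), hP])
        exact ⟨q, fun _ => hq⟩
      · exact ⟨0, fun h => absurd h hℓ⟩
    choose q hq using this
    exact ⟨q, hq⟩
  have hbounds : ∀ (d : ℕ) (P : Polynomial ℝ), P.natDegree = N →
      ersatz L N d a b w P ≤ L1K L a b w P ∧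
      (1 - η d) * L1K L a b w P ≤ ersatz L N d a b w P := by
    intro d P hP
    obtain ⟨q, hq⟩ := hex P hP
    set S : Set ℝ := { s : ℝ |
      ∃ q : ℕ → Fin (N + 1) → ℝ,
      (∀ ℓ < L, transplant (a ℓ) (b ℓ) P
          = ∑ n : Fin (N + 1), Polynomial.C (q ℓ n) * Polynomial.Chebyshev.U ℝ ((n : ℕ) : ℤ)) ∧
      ∃ yp ym : ℕ → Fin (d + 1) → ℝ,
        (∀ ℓ < L, ∀ k : Fin (d + 1),
            yp ℓ k - ym ℓ k
              = ∑ n : Fin (N + 1), Jent (a ℓ) (b ℓ) w (k : ℕ) (n : ℕ) * q ℓ n) ∧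
        (∀ ℓ < L, (toepFin d (yp ℓ)).PosSemidef ∧ (toepFin d (ym ℓ)).PosSemidef) ∧
        s = ∑ ℓ ∈ Finset.range L, ((b ℓ - a ℓ) / 2) * (yp ℓ 0 + ym ℓ 0) } with hS
    have hE : ersatz L N d a b w P = sInf S := rfl
    have hmem : L1K L a b w P ∈ S := by
      refine ⟨q, hq,
        fun ℓ => ErsatzAux.mom d (fun θ => max (ErsatzAux.G (a ℓ) (b ℓ) w (q ℓ) θ) 0),
        fun ℓ => ErsatzAux.mom d (fun θ => max (-ErsatzAux.G (a ℓ) (b ℓ) w (q ℓ) θ) 0),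
        fun ℓ hℓ k => ?_, fun ℓ hℓ => ?_, ?_⟩
      · rw [ErsatzAux.momG (hab ℓ hℓ) (hwc ℓ hℓ) (hwp ℓ hℓ)]
        exact ErsatzAux.mom_pm d _ (ErsatzAux.G_cont (hab ℓ hℓ) (hwc ℓ hℓ) (hwp ℓ hℓ) _) k
      · exact ErsatzAux.pm_psd d _ (ErsatzAux.G_cont (hab ℓ hℓ) (hwc ℓ hℓ) (hwp ℓ hℓ) _)
      · rw [hL1 P q hq]
        refine Finset.sum_congr rfl fun ℓ hℓ => ?_
        have hℓ' := Finset.mem_range.mp hℓ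
        rw [ErsatzAux.mom_pm0 d _ (ErsatzAux.G_cont (hab ℓ hℓ') (hwc ℓ hℓ') (hwp ℓ hℓ') _)]
    have hlow : ∀ s ∈ S, (1 - η d) * L1K L a b w P ≤ s := by
      rintro s ⟨q, hq, yp, ym, hy, hpsd, rfl⟩
      rw [hL1 P q hq, Finset.mul_sum]
      refine Finset.sum_le_sum fun ℓ hℓ => ?_
      have hℓ' := Finset.mem_range.mp hℓ
      have h1 := ErsatzAux.seg_lower (hab ℓ hℓ') (hwc ℓ hℓ') (hwp ℓ hℓ') (hM ℓ hℓ') (q ℓ) d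
        (yp ℓ) (ym ℓ) (hy ℓ hℓ') (hpsd ℓ hℓ').1 (hpsd ℓ hℓ').2
      have h2 := hηge d ℓ hℓ'
      have h3 : 0 ≤ ∫ θ in (0:ℝ)..Real.pi, |ErsatzAux.G (a ℓ) (b ℓ) w (q ℓ) θ| :=
        intervalIntegral.integral_nonneg Real.pi_pos.le fun _ _ => abs_nonneg _
      have h4 : 0 ≤ (b ℓ - a ℓ) / 2 := by linarith [hab ℓ hℓ']
      rw [mul_left_comm]
      refine mul_le_mul_of_nonneg_left (le_trans ?_ h1) h4
      exact mul_le_mul_of_nonneg_right (by linarith) h3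
    rw [hE]
    exact ⟨csInf_le ⟨_, hlow⟩ hmem, le_csInf ⟨_, hmem⟩ hlow⟩
  have hterm : ∀ (q : Fin (N + 1) → ℝ) (ℓ : ℕ), 0 ≤
      ∫ θ in (0:ℝ)..Real.pi, |ErsatzAux.G (a ℓ) (b ℓ) w q θ| := fun q ℓ =>
    intervalIntegral.integral_nonneg Real.pi_pos.le fun _ _ => abs_nonneg _
  have hnonneg : ∀ P : Polynomial ℝ, P.natDegree = N → 0 ≤ L1K L a b w P := by
    intro P hP
    obtain ⟨q, hq⟩ := hex P hP
    rw [hL1 P q hq]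
    refine Finset.sum_nonneg fun ℓ hℓ => ?_
    have := hab ℓ (Finset.mem_range.mp hℓ)
    exact mul_nonneg (by linarith) (hterm _ _)
  have hpos : ∀ P : Polynomial ℝ, P.natDegree = N → 0 < L1K L a b w P := by
    intro P hP
    refine lt_of_le_of_ne (hnonneg P hP) fun h0 => ?_
    obtain ⟨q, hq⟩ := hex P hP
    rw [hL1 P q hq, eq_comm, Finset.sum_eq_zero_iff_of_nonneg (fun ℓ hℓ =>
      mul_nonneg (by linarith [hab ℓ (Finset.mem_range.mp hℓ)]) (hterm _ _))] at h0
    have h1 := h0 0 (Finset.mem_range.mpr hL)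
    have hab0 := hab 0 hL
    have h2 : ∫ θ in (0:ℝ)..Real.pi, |ErsatzAux.G (a 0) (b 0) w (q 0) θ| = 0 :=
      (mul_eq_zero.mp h1).resolve_left (by linarith)
    have h3 : ∀ n, q 0 n = 0 := by
      intro n
      have := ErsatzAux.coef_bound hab0 (hwc 0 hL) (hwp 0 hL) (hM 0 hL) (q 0) n
      rw [h2, mul_zero] at this
      exact abs_nonpos_iff.mp this
    have h4 := hq 0 hL
    simp only [h3, map_zero, zero_mul, Finset.sum_const_zero] at h4
    have h5 := ErsatzAux.transplant_deg (a 0) (b 0) hab0 P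
    rw [h4, hP, Polynomial.natDegree_zero] at h5
    omega
  have hδ0 : ∀ d, N ≤ d → 0 ≤ δ d := by
    intro d hd
    have hdeg := (hV d hd).2.1
    rw [hδ d, sub_nonneg, div_le_one (hpos _ hdeg)]
    exact (hbounds d _ hdeg).1
  refine ⟨hδ0, ?_⟩
  refine tendsto_of_tendsto_of_tendsto_of_le_of_le' tendsto_const_nhds hη0 ?_ ?_
  · filter_upwards [eventually_ge_atTop N] with d hd using hδ0 d hd
  · filter_upwards [eventually_ge_atTop N] with d hd
    have hdeg := (hV d hd).2.1
    have h1 := (hbounds d _ hdeg).2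
    rw [← le_div_iff₀ (hpos _ hdeg)] at h1
    rw [hδ d]
    linarith
end

section
/- Let K = ⋃_{ℓ=1}^L [a_ℓ, b_ℓ] ⊆ [−1,1] with −1 = a_1 < b_1 < a_2 < ⋯ < a_L < b_L = 1, let N ≥ 1, let 𝒯_N be a monic polynomial of degree N minimizing the sup norm ‖P‖_K := max_{x∈K}|P(x)| among monic polynomials of degree N, and let 𝒫_N be a monic polynomial of degree N minimizing the L2 norm ‖P‖_{L2(K)} := (Σ_ℓ ∫_{a_ℓ}^{b_ℓ} P(t)² dt)^{1/2} among monic polynomials of degree N. Then (1/(N+1))·[min_{ℓ=1:L}(b_ℓ − a_ℓ)]^{1/2}·‖𝒯_N‖_K ≤ ‖𝒫_N‖_{L2(K)} ≤ [Σ_{ℓ=1}^L (b_ℓ − a_ℓ)]^{1/2}·‖𝒯_N‖_K. -/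
open MeasureTheory Filter Polynomial

/-- The sup norm `‖P‖_K = max_{x ∈ K} |P(x)|` on `K = ⋃_{ℓ<L} [a ℓ, b ℓ]`. -/
noncomputable def supK (L : ℕ) (a b : ℕ → ℝ) (P : Polynomial ℝ) : ℝ :=
  sSup ((fun x => |P.eval x|) '' ⋃ ℓ ∈ Finset.range L, Set.Icc (a ℓ) (b ℓ))

/-- The `L2` norm `‖P‖_{L2(K)} = (∑_ℓ ∫_{a_ℓ}^{b_ℓ} P(t)² dt)^{1/2}`. -/
noncomputable def L2K (L : ℕ) (a b : ℕ → ℝ) (P : Polynomial ℝ) : ℝ :=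
  Real.sqrt (∑ ℓ ∈ Finset.range L, ∫ t in (a ℓ)..(b ℓ), (P.eval t) ^ 2)

/-- Integral of a polynomial times another over `[0,1]`, integration by parts. -/
lemma aux_parts (f p : ℝ[X]) :
    ∫ t in (0:ℝ)..1, (derivative f).eval t * p.eval t =
      f.eval 1 * p.eval 1 - f.eval 0 * p.eval 0 -
        ∫ t in (0:ℝ)..1, f.eval t * (derivative p).eval t := by
  have h := intervalIntegral.integral_mul_deriv_eq_deriv_mul (a := 0) (b := 1)
    (fun x _ => f.hasDerivAt x) (fun x _ => p.hasDerivAt x)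
    ((Polynomial.continuous _).intervalIntegrable _ _)
    ((Polynomial.continuous _).intervalIntegrable _ _)
  linarith

lemma aux_iter (N : ℕ) (w : ℝ[X]) (h0 : X ^ N ∣ w) (h1 : (1 - X) ^ N ∣ w) :
    ∀ k ≤ N, ∀ p : ℝ[X], ∫ t in (0:ℝ)..1, (derivative^[k] w).eval t * p.eval t =
      (-1) ^ k * ∫ t in (0:ℝ)..1, w.eval t * (derivative^[k] p).eval t := by
  intro k
  induction k with
  | zero => intro _ p; simp
  | succ k ih =>
    intro hk p
    have e0 : (derivative^[k] w).eval 0 = 0 := by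
      have h := pow_sub_dvd_iterate_derivative_of_pow_dvd k h0
      obtain ⟨r, hr⟩ := h
      rw [hr]
      have : N - k ≠ 0 := by omega
      simp [this]
    have e1 : (derivative^[k] w).eval 1 = 0 := by
      have h := pow_sub_dvd_iterate_derivative_of_pow_dvd k h1
      obtain ⟨r, hr⟩ := h
      rw [hr]
      have : N - k ≠ 0 := by omega
      simp [this]
    rw [Function.iterate_succ_apply', aux_parts, e0, e1, ih (by omega), Function.iterate_succ_apply]
    ring

/-- The reproducing kernel at `0` on `[0,1]`. -/
lemma aux_kernel (N : ℕ) : ∃ q : ℝ[X], q.natDegree ≤ N ∧ q.eval 0 = ((N:ℝ) + 1) ^ 2 ∧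
    ∀ p : ℝ[X], p.natDegree ≤ N → ∫ t in (0:ℝ)..1, q.eval t * p.eval t = p.eval 0 := by
  set w : ℝ[X] := X ^ N * (1 - X) ^ (N + 1) with hw
  have hN : (N.factorial : ℝ) ≠ 0 := by positivity
  have g1 : (derivative^[N] w).eval 1 = 0 := by
    have h : (1 - X) ^ (N+1) ∣ w := ⟨X ^ N, by rw [hw]; ring⟩
    obtain ⟨r, hr⟩ := pow_sub_dvd_iterate_derivative_of_pow_dvd N h
    rw [hr]
    simp
  have c0 : w.coeff N = 1 := by
    rw [hw, coeff_X_pow_mul', if_pos le_rfl, Nat.sub_self, coeff_zero_eq_eval_zero]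
    simp
  have c1 : w.coeff (N + 1) = -((N:ℝ) + 1) := by
    rw [hw, coeff_X_pow_mul', if_pos (by omega), Nat.add_sub_cancel_left]
    have := coeff_derivative ((1 - X : ℝ[X]) ^ (N + 1)) 0
    rw [coeff_zero_eq_eval_zero] at this
    simp [derivative_pow] at this
    linarith
  have g0 : (derivative^[N] w).eval 0 = N.factorial := by
    rw [← coeff_zero_eq_eval_zero, coeff_iterate_derivative]
    simp [c0, Nat.descFactorial_self]
  have g2 : (derivative^[N+1] w).eval 0 = -((N+1).factorial * ((N:ℝ) + 1)) := by
    rw [← coeff_zero_eq_eval_zero, coeff_iterate_derivative, zero_add, c1, Nat.descFactorial_self, nsmul_eq_mul]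
    ring
  refine ⟨C (-(N.factorial : ℝ)⁻¹) * derivative^[N+1] w, ?_, ?_, ?_⟩
  · refine (natDegree_C_mul_le _ _).trans ((natDegree_iterate_derivative _ _).trans ?_)
    have : w.natDegree ≤ N + (N + 1) := by
      rw [hw]
      refine natDegree_mul_le.trans (add_le_add (natDegree_X_pow_le _) ?_)
      refine natDegree_pow_le.trans ?_
      have : (1 - X : ℝ[X]).natDegree ≤ 1 := by
        refine (natDegree_sub_le _ _).trans (by simp)
      nlinarith
    omega
  · rw [eval_mul, g2, eval_C, Nat.factorial_succ]
    push_cast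
    field_simp
  · intro p hp
    have h2 := aux_iter N w ⟨(1 - X) ^ (N+1), rfl⟩ ⟨X ^ N * (1 - X), by rw [hw]; ring⟩ N le_rfl
      (derivative p)
    have h3 : derivative^[N] (derivative p) = 0 := by
      rw [← Function.iterate_succ_apply]
      exact iterate_derivative_eq_zero (by omega)
    rw [h3] at h2
    simp only [eval_zero, mul_zero, intervalIntegral.integral_zero] at h2
    simp only [eval_mul, eval_C, mul_assoc, intervalIntegral.integral_const_mul]
    rw [Function.iterate_succ_apply', aux_parts, h2, g0, g1]
    field_simp
    ring

lemma aux_end (N : ℕ) (p : ℝ[X]) (hp : p.natDegree ≤ N) :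
    p.eval 0 ^ 2 ≤ ((N:ℝ) + 1) ^ 2 * ∫ t in (0:ℝ)..1, p.eval t ^ 2 := by
  obtain ⟨q, hq, hq0, hr⟩ := aux_kernel N
  set s := p.eval 0 with hs
  have hM : (0:ℝ) < ((N:ℝ) + 1) ^ 2 := by positivity
  set M := ((N:ℝ) + 1) ^ 2 with hMd
  have hpos : 0 ≤ ∫ t in (0:ℝ)..1, (M * p.eval t - s * q.eval t) ^ 2 :=
    intervalIntegral.integral_nonneg (by norm_num) (fun _ _ => sq_nonneg _)
  have hI : ∀ f : ℝ[X], IntervalIntegrable (fun t => f.eval t) volume 0 1 :=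
    fun f => (Polynomial.continuous f).intervalIntegrable _ _
  have e : ∫ t in (0:ℝ)..1, (M * p.eval t - s * q.eval t) ^ 2 =
      M ^ 2 * (∫ t in (0:ℝ)..1, p.eval t ^ 2) - 2 * M * s * (∫ t in (0:ℝ)..1, q.eval t * p.eval t)
        + s ^ 2 * ∫ t in (0:ℝ)..1, q.eval t * q.eval t := by
    rw [← intervalIntegral.integral_const_mul, ← intervalIntegral.integral_const_mul,
      ← intervalIntegral.integral_const_mul, ← intervalIntegral.integral_sub,
      ← intervalIntegral.integral_add]
    · congr 1; ext t; ring
    all_goals exact Continuous.intervalIntegrable (by fun_prop) _ _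
  rw [e, hr p hp, hr q hq, hq0] at hpos
  have : 0 ≤ M * (M * (∫ t in (0:ℝ)..1, p.eval t ^ 2) - s ^ 2) := by
    nlinarith
  have := nonneg_of_mul_nonneg_right this hM
  linarith

lemma aux_aff (N : ℕ) (p : ℝ[X]) (hp : p.natDegree ≤ N) (c d : ℝ) (h : d ≠ 0) :
    p.eval c ^ 2 ≤ ((N:ℝ) + 1) ^ 2 * (d⁻¹ * ∫ t in c..(c + d), p.eval t ^ 2) := by
  have h1 := aux_end N (p.comp (C c + C d * X)) (by
    refine natDegree_comp_le.trans ?_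
    have : (C c + C d * X : ℝ[X]).natDegree ≤ 1 := by
      rw [add_comm]; exact natDegree_linear_le
    nlinarith)
  simp only [eval_comp, eval_add, eval_mul, eval_C, eval_X, mul_zero, add_zero] at h1
  have h2 := intervalIntegral.integral_comp_add_mul (a := 0) (b := 1)
    (fun t => p.eval t ^ 2) h c
  simp only [mul_zero, add_zero, mul_one, smul_eq_mul] at h2
  rwa [h2] at h1

lemma aux_int (N : ℕ) (p : ℝ[X]) (hp : p.natDegree ≤ N) (a b x : ℝ) (hx : x ∈ Set.Icc a b) :
    p.eval x ^ 2 * (b - a) ≤ ((N:ℝ) + 1) ^ 2 * ∫ t in a..b, p.eval t ^ 2 := by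
  obtain ⟨h1, h2⟩ := hx
  have hI : ∀ u v, IntervalIntegrable (fun t => p.eval t ^ 2) volume u v :=
    fun u v => Continuous.intervalIntegrable (by fun_prop) _ _
  rw [← intervalIntegral.integral_add_adjacent_intervals (hI a x) (hI x b)]
  have A : p.eval x ^ 2 * (b - x) ≤ ((N:ℝ) + 1) ^ 2 * ∫ t in x..b, p.eval t ^ 2 := by
    rcases h2.eq_or_lt with h | h
    · simp [h]
    · have := aux_aff N p hp x (b - x) (by linarith)
      rw [add_sub_cancel] at this
      have hd : 0 < b - x := by linarith
      calc _ ≤ _ := mul_le_mul_of_nonneg_right this hd.le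
        _ = _ := by field_simp
  have B : p.eval x ^ 2 * (x - a) ≤ ((N:ℝ) + 1) ^ 2 * ∫ t in a..x, p.eval t ^ 2 := by
    rcases h1.eq_or_lt with h | h
    · simp [h]
    · have := aux_aff N p hp x (a - x) (by linarith)
      rw [add_sub_cancel, intervalIntegral.integral_symm] at this
      have hd : 0 < x - a := by linarith
      have hd' : a - x ≠ 0 := by linarith
      calc _ ≤ _ := mul_le_mul_of_nonneg_right this hd.le
        _ = _ := by field_simp; ring
  linarith

lemma aux_bdd (L : ℕ) (a b : ℕ → ℝ) (P : ℝ[X]) :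
    BddAbove ((fun x => |P.eval x|) '' ⋃ ℓ ∈ Finset.range L, Set.Icc (a ℓ) (b ℓ)) := by
  refine IsCompact.bddAbove_image ?_ (by fun_prop)
  exact (Finset.range L).isCompact_biUnion (fun _ _ => isCompact_Icc)

/-- Comparison of the sup norm of the Chebyshev (sup-norm-minimal) monic polynomial `T`
and the `L2` norm of the `L2`-minimal monic polynomial `P` of degree `N` on `K`:
`(1/(N+1)) · (min_ℓ (b_ℓ − a_ℓ))^{1/2} · ‖T‖_K ≤ ‖P‖_{L2(K)} ≤ (∑_ℓ (b_ℓ − a_ℓ))^{1/2} · ‖T‖_K`. -/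
theorem L2_min_vs_sup_min
    (L : ℕ) (hL : 0 < L) (a b : ℕ → ℝ)
    (ha0 : a 0 = -1) (hbL : b (L - 1) = 1)
    (hab : ∀ ℓ < L, a ℓ < b ℓ)
    (hgap : ∀ ℓ, ℓ + 1 < L → b ℓ < a (ℓ + 1))
    (N : ℕ) (hN : 1 ≤ N)
    (T : Polynomial ℝ) (hTmonic : T.Monic) (hTdeg : T.natDegree = N)
    (hTmin : ∀ Q : Polynomial ℝ, Q.Monic → Q.natDegree = N → supK L a b T ≤ supK L a b Q)
    (P : Polynomial ℝ) (hPmonic : P.Monic) (hPdeg : P.natDegree = N)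
    (hPmin : ∀ Q : Polynomial ℝ, Q.Monic → Q.natDegree = N → L2K L a b P ≤ L2K L a b Q) :
    (1 / ((N : ℝ) + 1)) *
        Real.sqrt ((Finset.range L).inf' (Finset.nonempty_range_iff.mpr hL.ne')
          (fun ℓ => b ℓ - a ℓ)) * supK L a b T
      ≤ L2K L a b P ∧
    L2K L a b P ≤ Real.sqrt (∑ ℓ ∈ Finset.range L, (b ℓ - a ℓ)) * supK L a b T := by
  have hle : ∀ Q : ℝ[X], ∀ ℓ < L, ∀ x ∈ Set.Icc (a ℓ) (b ℓ), |Q.eval x| ≤ supK L a b Q := by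
    intro Q ℓ hℓ x hx
    refine le_csSup (aux_bdd L a b Q) ⟨x, ?_, rfl⟩
    simp only [Set.mem_iUnion]
    exact ⟨ℓ, Finset.mem_range.mpr hℓ, hx⟩
  have hN1 : (0:ℝ) < (N:ℝ) + 1 := by positivity
  constructor
  · set m := (Finset.range L).inf' (Finset.nonempty_range_iff.mpr hL.ne')
          (fun ℓ => b ℓ - a ℓ) with hm
    have hmpos : 0 < m := by
      rw [hm, Finset.lt_inf'_iff]
      intro ℓ hℓ
      have := hab ℓ (Finset.mem_range.mp hℓ)
      linarith
    have hs : 0 < Real.sqrt m := Real.sqrt_pos.mpr hmpos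
    have key : supK L a b P ≤ L2K L a b P * ((N:ℝ) + 1) / Real.sqrt m := by
      refine csSup_le ?_ ?_
      · refine Set.Nonempty.image _ ⟨a 0, ?_⟩
        simp only [Set.mem_iUnion]
        exact ⟨0, Finset.mem_range.mpr hL, le_rfl, (hab 0 hL).le⟩
      · rintro _ ⟨x, hx, rfl⟩
        simp only [Set.mem_iUnion] at hx
        obtain ⟨ℓ, hℓ, hx⟩ := hx
        have h1 := aux_int N P hPdeg.le _ _ x hx
        have h2 : m ≤ b ℓ - a ℓ := Finset.inf'_le _ hℓ
        have h3 : ∫ t in (a ℓ)..(b ℓ), (P.eval t) ^ 2 ≤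
            ∑ ℓ ∈ Finset.range L, ∫ t in (a ℓ)..(b ℓ), (P.eval t) ^ 2 := by
          refine Finset.single_le_sum
            (f := fun ℓ => ∫ t in (a ℓ)..(b ℓ), (P.eval t) ^ 2) (fun i hi => ?_) hℓ
          exact intervalIntegral.integral_nonneg (hab i (Finset.mem_range.mp hi)).le
            (fun _ _ => sq_nonneg _)
        rw [le_div_iff₀ hs]
        unfold L2K
        set S := ∑ ℓ ∈ Finset.range L, ∫ t in (a ℓ)..(b ℓ), (P.eval t) ^ 2
        have h4 : P.eval x ^ 2 * m ≤ ((N:ℝ) + 1) ^ 2 * S :=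
          (mul_le_mul_of_nonneg_left h2 (sq_nonneg _)).trans
            (h1.trans (mul_le_mul_of_nonneg_left h3 (sq_nonneg _)))
        have h5 := Real.sqrt_le_sqrt h4
        rw [Real.sqrt_mul (sq_nonneg _), Real.sqrt_mul (sq_nonneg _), Real.sqrt_sq_eq_abs,
          Real.sqrt_sq hN1.le] at h5
        linarith
    have h6 := (hTmin P hPmonic hPdeg).trans key
    rw [le_div_iff₀ hs] at h6
    rw [one_div, mul_assoc, inv_mul_le_iff₀ hN1]
    linarith
  · refine (hPmin T hTmonic hTdeg).trans ?_
    have hT0 : 0 ≤ supK L a b T :=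
      (abs_nonneg _).trans (hle T 0 hL (a 0) ⟨le_rfl, (hab 0 hL).le⟩)
    rw [← Real.sqrt_sq hT0, L2K, ← Real.sqrt_mul' _ (sq_nonneg _)]
    refine Real.sqrt_le_sqrt ?_
    rw [Finset.sum_mul]
    refine Finset.sum_le_sum (fun ℓ hℓ => ?_)
    have hℓ' := Finset.mem_range.mp hℓ
    have := intervalIntegral.integral_mono_on (μ := volume) (hab ℓ hℓ').le
      (f := fun t => T.eval t ^ 2) (g := fun _ => supK L a b T ^ 2)
      (Continuous.intervalIntegrable (by fun_prop) _ _)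
      (Continuous.intervalIntegrable (by fun_prop) _ _)
      (fun x hx => by
        rw [← sq_abs]
        exact pow_le_pow_left₀ (abs_nonneg _) (hle T ℓ hℓ' x hx) 2)
    simpa using this
end
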